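/- arXiv:1905.08683 — 2 statements merged into one kernel-verified Lean document; each statement's English description precedes it below -/
import Mathlib

section
/- Let G be any of the three minimal 8-vertex Lemke graphs L, L₁, L₂, and let H be either the complete graph K₁₂ on 12 vertices or the complete bipartite graph K_{6,6}. Then the pebbling number of the Cartesian product satisfies π(G□H) = 96. -/
open SimpleGraph Finset

/-- A single pebbling move on `G`: remove two pebbles from a vertex `v` with at least two
pebbles and add one pebble to an adjacent vertex `w`. -/
def PebblingMove {V : Type*} (G : SimpleGraph V) (c c' : V → ℕ) : Prop :=
  ∃ v w, G.Adj v w ∧ 2 ≤ c v ∧ c' v = c v - 2 ∧ c' w = c w + 1 ∧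
    ∀ u, u ≠ v → u ≠ w → c' u = c u

/-- Some finite sequence of pebbling moves starting from `c` places at least `t` pebbles
on the vertex `r`. -/
def NSolvable {V : Type*} (G : SimpleGraph V) (c : V → ℕ) (r : V) (t : ℕ) : Prop :=
  ∃ c', Relation.ReflTransGen (PebblingMove G) c c' ∧ t ≤ c' r

/-- A configuration `c` is `r`-solvable. -/
def Solvable {V : Type*} (G : SimpleGraph V) (c : V → ℕ) (r : V) : Prop :=
  NSolvable G c r 1

/-- The pebbling number `π(G)`: least `k` such that every configuration of size `k` is
`r`-solvable for every root `r`. -/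
noncomputable def pebblingNumber {V : Type*} (G : SimpleGraph V) [Fintype V] : ℕ :=
  sInf {k | ∀ c : V → ℕ, (∑ v, c v) = k → ∀ r, Solvable G c r}

/-- The 2-pebbling number `π₂(G, s)`: least `m` such that for every root `r`, every
configuration of size at least `m` with support of size exactly `s` can place two pebbles
on `r`. -/
noncomputable def twoPebblingNumber {V : Type*} (G : SimpleGraph V) [Fintype V] (s : ℕ) : ℕ :=
  sInf {m | ∀ (r : V) (c : V → ℕ), m ≤ ∑ v, c v →
    (Finset.univ.filter fun v => 1 ≤ c v).card = s → NSolvable G c r 2}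

/-- The Lemke graph `L` on vertices `v1, …, v8` (as `0, …, 7`). -/
def lemkeL : SimpleGraph (Fin 8) :=
  SimpleGraph.fromRel fun a b =>
    (a, b) ∈ ([(0, 1), (0, 2), (1, 3), (2, 4), (2, 5), (2, 6), (3, 4), (3, 5), (3, 6),
      (3, 7), (4, 7), (5, 7), (6, 7)] : List (Fin 8 × Fin 8))

/-- The minimal Lemke graph `L₁`. -/
def lemkeL1 : SimpleGraph (Fin 8) :=
  SimpleGraph.fromRel fun a b =>
    (a, b) ∈ ([(0, 1), (0, 2), (1, 2), (1, 3), (2, 4), (2, 5), (2, 6), (3, 4), (3, 7),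
      (4, 7), (5, 7), (6, 7)] : List (Fin 8 × Fin 8))

/-- The minimal Lemke graph `L₂`. -/
def lemkeL2 : SimpleGraph (Fin 8) :=
  SimpleGraph.fromRel fun a b =>
    (a, b) ∈ ([(0, 1), (0, 2), (1, 3), (2, 4), (2, 5), (2, 6), (3, 4), (3, 6), (3, 7),
      (4, 5), (4, 7), (5, 6), (5, 7), (6, 7)] : List (Fin 8 × Fin 8))

/-!
Let `A ∪ B` be the bipartition of a spanning `K_{m,m}` in `H`, with the root over `h₀ ∈ A`, and
suppose that the root cannot be reached. Moving all pairs of pebbles from the fibers over `B` to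
the fiber over `h₀` shows that these hold few pairs, since `n = |G|` pebbles on one fiber would
suffice. For `b ∈ B`, two pebbles on the copy of the root over `b` would also suffice, so after
moving all pairs over `A` to the fiber over `b`, that fiber has fewer than the `3n - 2s` pebbles,
`s` of its vertices being occupied, that place two pebbles on any vertex of `G` when `s < n`.
Summing over `b` accounts for too few pebbles unless some fiber over `B` is full. A full fiber
needs just one additional pebble to place two on any vertex, so there are no pairs over
`A \ {h₀}`, and then the same count gives a full fiber there as well. Now there are no pairs over
`B` either, and the total is too small.

That `3n - 2s` pebbles suffice in the three Lemke graphs is verified by a search through all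
configurations, which the kernel evaluates.
-/

section Calculus

variable {V : Type*} {G : SimpleGraph V} {a b c d e : V → ℕ} {r v w : V} {s t : ℕ}

/-- The preorder on configurations generated by pebbling moves and by discarding pebbles:
`PebblesTo G c d` says that moves starting from `c` reach a configuration dominating `d`. -/
def PebblesTo (G : SimpleGraph V) (c d : V → ℕ) : Prop :=
  ∃ c', Relation.ReflTransGen (PebblingMove G) c c' ∧ d ≤ c'

theorem single_le_iff_le_apply [DecidableEq V] {k : ℕ} : Pi.single v k ≤ c ↔ k ≤ c v := by
  refine ⟨fun h => by simpa using h v, fun h u => ?_⟩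
  rcases eq_or_ne u v with rfl | huv
  · simpa using h
  · simp [huv]

theorem pebblingMove_iff [DecidableEq V] : PebblingMove G c d ↔
    ∃ v w, ∃ e : V → ℕ, G.Adj v w ∧ c = e + Pi.single v 2 ∧ d = e + Pi.single w 1 := by
  constructor
  · rintro ⟨v, w, hvw, hc, hv, hw, hu⟩
    refine ⟨v, w, c - Pi.single v 2, hvw, (tsub_add_cancel_of_le ?_).symm, ?_⟩
    · simpa only [single_le_iff_le_apply] using hc
    · ext u
      rcases eq_or_ne u v with rfl | huv
      · simp [hv, hvw.ne]
      rcases eq_or_ne u w with rfl | huw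
      · simp [hw, huv]
      · simp [hu u huv huw, huv, huw]
  · rintro ⟨v, w, e, hvw, rfl, rfl⟩
    refine ⟨v, w, hvw, by simp, by simp [hvw.ne], by simp [hvw.ne'], fun u huv huw => ?_⟩
    simp [huv, huw]

theorem PebblingMove.add_right (h : PebblingMove G c d) (e : V → ℕ) :
    PebblingMove G (c + e) (d + e) := by
  classical
  obtain ⟨v, w, e', hvw, rfl, rfl⟩ := pebblingMove_iff.1 h
  exact pebblingMove_iff.2 ⟨v, w, e' + e, hvw, add_right_comm .., add_right_comm ..⟩

namespace PebblesTo

theorem of_le (h : d ≤ c) : PebblesTo G c d := ⟨c, .refl, h⟩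

theorem refl (c : V → ℕ) : PebblesTo G c c := of_le le_rfl

theorem add_right (h : PebblesTo G c d) (e : V → ℕ) : PebblesTo G (c + e) (d + e) := by
  obtain ⟨c', hc, hd⟩ := h
  exact ⟨c' + e, hc.lift (· + e) fun _ _ hm => hm.add_right e, add_le_add_left hd e⟩

theorem trans (hab : PebblesTo G a b) (hbc : PebblesTo G b c) : PebblesTo G a c := by
  obtain ⟨a', ha, hb⟩ := hab
  obtain ⟨b', hb', hc⟩ := hbc
  refine ⟨b' + (a' - b), ?_, hc.trans le_self_add⟩
  have hlift := hb'.lift (· + (a' - b)) fun _ _ hm => hm.add_right _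
  simp only [Function.onFun, add_tsub_cancel_of_le hb] at hlift
  exact ha.trans hlift

theorem add (hab : PebblesTo G a b) (hcd : PebblesTo G c d) :
    PebblesTo G (a + c) (b + d) :=
  (hab.add_right c).trans (by simpa only [add_comm b] using hcd.add_right b)

theorem sum {ι : Type*} {f g : ι → V → ℕ} (s : Finset ι)
    (h : ∀ i ∈ s, PebblesTo G (f i) (g i)) : PebblesTo G (∑ i ∈ s, f i) (∑ i ∈ s, g i) := by
  classical
  induction s using Finset.induction_on with
  | empty => exact refl _
  | insert i s hi ih =>
    rw [sum_insert hi, sum_insert hi]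
    exact (h i (mem_insert_self i s)).add (ih fun j hj => h j (mem_insert_of_mem hj))

theorem single_of_adj [DecidableEq V] (h : G.Adj v w) (k : ℕ) :
    PebblesTo G (Pi.single v (2 * k)) (Pi.single w k) := by
  induction k with
  | zero => exact of_le (by simp)
  | succ k ih =>
    have hmove : PebblesTo G (Pi.single v 2) (Pi.single w 1) :=
      ⟨_, .single (pebblingMove_iff.2 ⟨v, w, 0, h, by simp, rfl⟩), by simp⟩
    simpa only [mul_add, mul_one, Pi.single_add] using ih.add hmove

theorem map {V' : Type*} {G' : SimpleGraph V'} [DecidableEq V] (f : (V → ℕ) →+ (V' → ℕ))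
    (hf : ∀ v w, G.Adj v w → PebblesTo G' (f (Pi.single v 2)) (f (Pi.single w 1)))
    (h : PebblesTo G c d) : PebblesTo G' (f c) (f d) := by
  obtain ⟨c', hc, hd⟩ := h
  have hc' : PebblesTo G' (f c) (f c') := by
    clear hd
    induction hc with
    | refl => exact refl _
    | tail _ hmove ih =>
      obtain ⟨v, w, e, hvw, rfl, rfl⟩ := pebblingMove_iff.1 hmove
      simp only [map_add] at ih ⊢
      exact ih.trans ((refl _).add (hf v w hvw))
  refine hc'.trans (of_le ?_)
  rw [← add_tsub_cancel_of_le hd, map_add]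
  exact le_self_add

end PebblesTo

theorem nSolvable_iff_pebblesTo [DecidableEq V] :
    NSolvable G c r t ↔ PebblesTo G c (Pi.single r t) := by
  simp only [NSolvable, PebblesTo, single_le_iff_le_apply]

namespace NSolvable

theorem of_pebblesTo (hcd : PebblesTo G c d) (hd : NSolvable G d r t) : NSolvable G c r t := by
  classical
  exact nSolvable_iff_pebblesTo.2 (hcd.trans (nSolvable_iff_pebblesTo.1 hd))

theorem of_le (h : t ≤ c r) : NSolvable G c r t := ⟨c, .refl, h⟩

theorem mono (h : NSolvable G c r t) (hcd : c ≤ d) : NSolvable G d r t :=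
  of_pebblesTo (.of_le hcd) h

theorem add (hc : NSolvable G c r s) (hd : NSolvable G d r t) :
    NSolvable G (c + d) r (s + t) := by
  classical
  rw [nSolvable_iff_pebblesTo] at *
  rw [Pi.single_add]
  exact hc.add hd

theorem of_adj (h : NSolvable G c v (2 * t)) (hvw : G.Adj v w) : NSolvable G c w t := by
  classical
  rw [nSolvable_iff_pebblesTo] at *
  exact h.trans (.single_of_adj hvw t)

theorem succ_of_tsub_single [DecidableEq V] (h : NSolvable G (c - Pi.single r 1) r t)
    (hr : 1 ≤ c r) : NSolvable G c r (t + 1) := by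
  rw [← tsub_add_cancel_of_le (single_le_iff_le_apply.2 hr)]
  exact h.add (of_le (by simp))

theorem of_two_pow_le {δ : V → ℕ} (hδ : ∀ v, v = r ∨ ∃ w, G.Adj v w ∧ δ w < δ v)
    (hv : t * 2 ^ δ v ≤ c v) : NSolvable G c r t := by
  suffices h : ∀ n v, δ v ≤ n → NSolvable G c v (t * 2 ^ n) → NSolvable G c r t from
    h _ v le_rfl (of_le hv)
  intro n
  induction n with
  | zero =>
    intro v hn hsolv
    rcases hδ v with rfl | ⟨w, -, hw⟩
    · simpa using hsolv
    · omega
  | succ n ih =>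
    intro v hn hsolv
    rcases hδ v with rfl | ⟨w, hvw, hw⟩
    · obtain ⟨c', hc, hle⟩ := hsolv
      exact ⟨c', hc, (Nat.le_mul_of_pos_right t (by positivity)).trans hle⟩
    · exact ih w (by omega) (of_adj (by rwa [pow_succ', mul_left_comm] at hsolv) hvw)

end NSolvable

end Calculus

section Configurations

variable {V : Type*} [Fintype V]

/-- The number of disjoint pairs of pebbles sharing a vertex. Each pair is worth one pebble on any
neighbour of that vertex. -/
def pairCount (c : V → ℕ) : ℕ := ∑ v, c v / 2

/-- The number of occupied vertices, called the support size in the pebbling literature. -/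
def supportSize (c : V → ℕ) : ℕ := #{v | 1 ≤ c v}

theorem sum_le_two_mul_pairCount_add_supportSize (c : V → ℕ) :
    ∑ v, c v ≤ 2 * pairCount c + supportSize c := by
  rw [pairCount, supportSize, card_filter, mul_sum, ← sum_add_distrib]
  refine sum_le_sum fun v _ => ?_
  split_ifs <;> omega

theorem supportSize_le_card (c : V → ℕ) : supportSize c ≤ Fintype.card V :=
  card_le_univ _

theorem supportSize_eq_card_iff {c : V → ℕ} :
    supportSize c = Fintype.card V ↔ ∀ v, 1 ≤ c v := by
  simp [supportSize, card_eq_iff_eq_univ, filter_eq_self]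

theorem supportSize_mono {c d : V → ℕ} (h : c ≤ d) : supportSize c ≤ supportSize d :=
  card_le_card <| monotone_filter_right _ fun v _ hv => le_trans hv (h v)

theorem supportSize_add_pairCount_le_sum (c : V → ℕ) :
    supportSize c + pairCount c ≤ ∑ v, c v := by
  rw [pairCount, supportSize, card_filter, ← sum_add_distrib]
  refine sum_le_sum fun v _ => ?_
  split_ifs <;> omega

theorem exists_between_sum_eq {a c : V → ℕ} {m : ℕ} (hac : a ≤ c) (ham : ∑ v, a v ≤ m)
    (hmc : m ≤ ∑ v, c v) : ∃ b, a ≤ b ∧ b ≤ c ∧ ∑ v, b v = m := by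
  classical
  induction m, ham using Nat.le_induction with
  | base => exact ⟨a, le_rfl, hac, rfl⟩
  | succ m _ ih =>
    obtain ⟨b, hab, hbc, hb⟩ := ih (by omega)
    obtain ⟨v, -, hv⟩ := exists_lt_of_sum_lt (show ∑ v, b v < ∑ v, c v by omega)
    refine ⟨b + Pi.single v 1, hab.trans le_self_add, fun u => ?_, ?_⟩
    · rcases eq_or_ne u v with rfl | huv
      · simpa using hv
      · simpa [huv] using hbc u
    · simp [sum_add_distrib, hb]

theorem exists_le_sum_eq_supportSize_eq {c : V → ℕ} {m : ℕ} (hs : supportSize c ≤ m)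
    (hm : m ≤ ∑ v, c v) : ∃ b ≤ c, ∑ v, b v = m ∧ supportSize b = supportSize c := by
  let a : V → ℕ := fun v => if 1 ≤ c v then 1 else 0
  have hac : a ≤ c := fun v => by dsimp only [a]; split_ifs <;> omega
  obtain ⟨b, hab, hbc, hb⟩ := exists_between_sum_eq hac
    (by rwa [supportSize, card_filter] at hs) hm
  have ha : supportSize a = supportSize c :=
    congrArg card <| filter_congr fun v _ => by dsimp only [a]; split_ifs <;> omega
  exact ⟨b, hbc, hb, (supportSize_mono hbc).antisymm (ha ▸ supportSize_mono hab)⟩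

end Configurations

section TwoPebbling

variable {α : Type*} [Fintype α] {G : SimpleGraph α} {c : α → ℕ} {r : α}

theorem nSolvable_two_of_two_mul_le {k : ℕ}
    (h : ∀ d : α → ℕ, k ≤ ∑ v, d v → Solvable G d r) (hc : 2 * k ≤ ∑ v, c v) :
    NSolvable G c r 2 := by
  obtain ⟨b, -, hbc, hb⟩ := exists_between_sum_eq (zero_le (a := c)) (m := k) (by simp) (by omega)
  obtain ⟨d, rfl⟩ := exists_add_of_le hbc
  simp only [Pi.add_apply, sum_add_distrib] at hc
  exact (h b hb.ge).add (h d (by omega))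

/-- `G` has pebbling number at most its number `n` of vertices, and a configuration with
`s < n` occupied vertices and at least `3 * n - 2 * s` pebbles can place two pebbles on any
root. (The usual two-pebbling property, which Lemke graphs violate, asks for only
`2 * n + 1 - s` pebbles.) -/
structure HasLemkePebbling (G : SimpleGraph α) : Prop where
  solvable (c : α → ℕ) (r : α) : Fintype.card α ≤ ∑ v, c v → Solvable G c r
  nSolvable_two (c : α → ℕ) (r : α) : supportSize c < Fintype.card α →
    3 * Fintype.card α ≤ ∑ v, c v + 2 * supportSize c → NSolvable G c r 2

namespace HasLemkePebbling

theorem nSolvable_two_of_forall_one_le (hG : HasLemkePebbling G) (hfull : ∀ v, 1 ≤ c v)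
    (hc : Fintype.card α < ∑ v, c v) : NSolvable G c r 2 := by
  classical
  have hsum : ∑ v, (c - Pi.single r 1 : α → ℕ) v + 1 = ∑ v, c v := by
    conv_rhs => rw [← tsub_add_cancel_of_le (single_le_iff_le_apply.2 (hfull r))]
    simp [sum_add_distrib]
  exact (hG.solvable (c - Pi.single r 1) r (by omega)).succ_of_tsub_single (hfull r)

theorem nSolvable_two_of_min (hG : HasLemkePebbling G)
    (hc : 3 * Fintype.card α ≤ ∑ v, c v + 2 * min (supportSize c) (Fintype.card α - 1)) :
    NSolvable G c r 2 := by
  rcases (supportSize_le_card c).lt_or_eq with hlt | heq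
  · exact hG.nSolvable_two c r hlt (by omega)
  · have := Fintype.card_pos_iff.2 ⟨r⟩
    exact hG.nSolvable_two_of_forall_one_le (supportSize_eq_card_iff.1 heq) (by omega)

end HasLemkePebbling

end TwoPebbling

section Product

variable {α β : Type*} {G : SimpleGraph α} {H : SimpleGraph β}
  {c : α × β → ℕ} {g : α} {h h' : β} {t : ℕ}

/-- The restriction of a configuration of `G □ H` to the copy of `G` over the vertex `h`. -/
def fiber (c : α × β → ℕ) (h : β) : α → ℕ := fun x => c (x, h)

/-- What reaches the copy of `G` over a neighbour of `h` when every pair of pebbles on the copy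
over `h` is moved there. -/
def halfFiber (c : α × β → ℕ) (h : β) : α → ℕ := fun x => c (x, h) / 2

variable [DecidableEq β]

/-- The configuration of `G □ H` that places a configuration of `G` on the copy of `G` over the
vertex `h` of `H`. -/
def onFiber (h : β) : (α → ℕ) →+ (α × β → ℕ) where
  toFun a x := if x.2 = h then a x.1 else 0
  map_zero' := by ext; simp
  map_add' a b := by ext x; dsimp only [Pi.add_apply]; split_ifs <;> rfl

theorem onFiber_apply (h : β) (a : α → ℕ) (x : α × β) :
    onFiber h a x = if x.2 = h then a x.1 else 0 := rfl

theorem onFiber_single [DecidableEq α] (h : β) (v : α) (k : ℕ) :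
    onFiber h (Pi.single v k) = Pi.single (v, h) k := by
  ext ⟨x, y⟩
  simp only [onFiber_apply, Pi.single_apply, Prod.mk.injEq]
  split_ifs <;> simp_all

theorem PebblesTo.onFiber {a b : α → ℕ} (hab : PebblesTo G a b) (h : β) :
    PebblesTo (G □ H) (onFiber h a) (onFiber h b) := by
  classical
  refine hab.map _ fun v w hvw => ?_
  simpa only [onFiber_single] using single_of_adj (boxProd_adj_left.2 hvw) 1

theorem NSolvable.onFiber {a : α → ℕ} (ha : NSolvable G a g t) (h : β) :
    NSolvable (G □ H) (onFiber h a) (g, h) t := by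
  classical
  rw [nSolvable_iff_pebblesTo] at *
  simpa only [onFiber_single] using ha.onFiber h

theorem pebblesTo_onFiber_halfFiber [Finite α] (hh : H.Adj h h') (c : α × β → ℕ) :
    PebblesTo (G □ H) (onFiber h (fiber c h)) (onFiber h' (halfFiber c h)) := by
  classical
  cases nonempty_fintype α
  have hle : ∑ x, Pi.single x (2 * halfFiber c h x) ≤ fiber c h := by
    rw [univ_sum_single]
    exact fun x => Nat.mul_div_le _ _
  rw [← univ_sum_single (halfFiber c h), ← add_tsub_cancel_of_le hle]
  simp only [map_add, map_sum, onFiber_single]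
  refine (PebblesTo.of_le le_self_add).trans (.sum _ fun x _ => ?_)
  exact .single_of_adj (boxProd_adj_right.2 hh) _

theorem pebblesTo_onFiber_add_sum [Finite α] (c : α × β → ℕ) {S : Finset β}
    (hS : ∀ s ∈ S, H.Adj s h) :
    PebblesTo (G □ H) c (onFiber h (fiber c h + ∑ s ∈ S, halfFiber c s)) := by
  have hh : h ∉ S := fun hmem => (hS h hmem).ne rfl
  have hle : onFiber h (fiber c h) + ∑ s ∈ S, onFiber s (fiber c s) ≤ c := by
    rintro ⟨x, y⟩
    simp only [Pi.add_apply, Finset.sum_apply, onFiber_apply, fiber, sum_ite_eq]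
    split_ifs with hy hyS
    · exact absurd (hy ▸ hyS) hh
    · simp [hy]
    · simp
    · simp
  rw [map_add, map_sum]
  exact (PebblesTo.of_le hle).trans <|
    (PebblesTo.refl _).add (.sum S fun s hs => pebblesTo_onFiber_halfFiber (hS s hs) c)

end Product

section Fibers

variable {α β : Type*} {G : SimpleGraph α} {H : SimpleGraph β}
  {c : α × β → ℕ} {g : α} {h h' : β} {t : ℕ} {S : Finset β}

theorem NSolvable.of_fiber [Finite α] (hS : ∀ s ∈ S, H.Adj s h)
    (hsolv : NSolvable G (fiber c h + ∑ s ∈ S, halfFiber c s) g t) :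
    NSolvable (G □ H) c (g, h) t := by
  classical
  exact .of_pebblesTo (pebblesTo_onFiber_add_sum c hS) (hsolv.onFiber h)

theorem sum_fiber_add_sum_halfFiber [Fintype α] (c : α × β → ℕ) (h : β) (S : Finset β) :
    ∑ x, (fiber c h + ∑ s ∈ S, halfFiber c s) x =
      ∑ x, fiber c h x + ∑ s ∈ S, pairCount (fiber c s) := by
  simp only [Pi.add_apply, Finset.sum_apply, sum_add_distrib]
  rw [sum_comm]
  rfl

variable [Fintype α]

theorem Solvable.of_fiber (hG : HasLemkePebbling G) (hS : ∀ s ∈ S, H.Adj s h)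
    (hc : Fintype.card α ≤ ∑ x, fiber c h x + ∑ s ∈ S, pairCount (fiber c s)) :
    Solvable (G □ H) c (g, h) :=
  NSolvable.of_fiber hS (hG.solvable _ _ (by rwa [sum_fiber_add_sum_halfFiber]))

theorem nSolvable_two_of_fiber (hG : HasLemkePebbling G) (hS : ∀ s ∈ S, H.Adj s h)
    (hc : 3 * Fintype.card α ≤ ∑ x, fiber c h x + ∑ s ∈ S, pairCount (fiber c s) +
      2 * min (supportSize (fiber c h)) (Fintype.card α - 1)) :
    NSolvable (G □ H) c (g, h) 2 := by
  refine .of_fiber hS (hG.nSolvable_two_of_min ?_)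
  rw [sum_fiber_add_sum_halfFiber]
  exact hc.trans (by gcongr; exact supportSize_mono le_self_add)

theorem nSolvable_two_of_full_fiber (hG : HasLemkePebbling G)
    (hS : ∀ s ∈ S, H.Adj s h) (hfull : ∀ x, 1 ≤ fiber c h x)
    (hpairs : 0 < pairCount (fiber c h) + ∑ s ∈ S, pairCount (fiber c s)) :
    NSolvable (G □ H) c (g, h) 2 := by
  refine .of_fiber hS (hG.nSolvable_two_of_forall_one_le (fun x => ?_) ?_)
  · exact (hfull x).trans (Nat.le_add_right _ _)
  · have := supportSize_add_pairCount_le_sum (fiber c h)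
    rw [supportSize_eq_card_iff.2 hfull] at this
    rw [sum_fiber_add_sum_halfFiber]
    omega

theorem nSolvable_two_of_adj_full_fibers (hG : HasLemkePebbling G) (hh : H.Adj h h')
    (hfull : ∀ x, 1 ≤ fiber c h x) (hfull' : ∀ x, 1 ≤ fiber c h' x) (hS : ∀ s ∈ S, H.Adj s h)
    (hpairs : 0 < ∑ s ∈ S, pairCount (fiber c s)) : NSolvable (G □ H) c (g, h') 2 := by
  classical
  rcases Nat.eq_zero_or_pos (pairCount (fiber c h')) with hzero | hpos
  · have hfiber : ∀ k ≠ h', fiber (c - Pi.single (g, h') 1) k = fiber c k := fun k hk => by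
      ext x
      simp [fiber, hk]
    have hS' : ∑ s ∈ S.erase h', pairCount (fiber (c - Pi.single (g, h') 1) s) =
        ∑ s ∈ S, pairCount (fiber c s) := by
      rw [← sum_erase S hzero]
      exact sum_congr rfl fun s hs => congrArg pairCount (hfiber s (ne_of_mem_erase hs))
    have htwo : NSolvable (G □ H) (c - Pi.single (g, h') 1) (g, h) 2 := by
      refine nSolvable_two_of_full_fiber hG (fun s hs => hS s (mem_of_mem_erase hs)) ?_
        (by rw [hS']; omega)
      rwa [hfiber h hh.ne]
    exact (htwo.of_adj (t := 1) (boxProd_adj_right.2 hh)).succ_of_tsub_single (hfull' g)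
  · exact nSolvable_two_of_full_fiber hG (S := ∅) (by simp) hfull' (by simpa using hpos)

end Fibers

section Counting

variable {α β : Type*} [Fintype α] {G : SimpleGraph α} {H : SimpleGraph β} {c : α × β → ℕ}
  {g : α} {h₀ : β} {S : Finset β}

theorem sum_fiber_le (c : α × β → ℕ) (T : Finset β) :
    ∑ h ∈ T, ∑ x, fiber c h x ≤
      2 * ∑ h ∈ T, pairCount (fiber c h) + ∑ h ∈ T, supportSize (fiber c h) := by
  rw [mul_sum, ← sum_add_distrib]
  exact sum_le_sum fun h _ => sum_le_two_mul_pairCount_add_supportSize _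

theorem sum_supportSize_fiber_le (c : α × β → ℕ) (T : Finset β) :
    ∑ h ∈ T, supportSize (fiber c h) ≤ #T * Fintype.card α := by
  simpa using sum_le_card_nsmul T _ _ fun h _ => supportSize_le_card (fiber c h)

theorem supportSize_lt_card_of_not_full {a : α → ℕ} (ha : ¬ ∀ x, 1 ≤ a x) :
    supportSize a < Fintype.card α :=
  (supportSize_le_card a).lt_of_ne fun heq => ha (supportSize_eq_card_iff.1 heq)

variable [DecidableEq β]

theorem sum_supportSize_fiber_erase_add_le (c : α × β → ℕ) (hh₀ : h₀ ∈ S) :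
    ∑ h ∈ S.erase h₀, supportSize (fiber c h) + Fintype.card α ≤ #S * Fintype.card α := by
  rw [← card_erase_add_one hh₀, add_one_mul]
  gcongr
  exact sum_supportSize_fiber_le c _

variable [Fintype β]

theorem sum_fiber_eq (c : α × β → ℕ) (hh₀ : h₀ ∈ S) :
    ∑ x, fiber c h₀ x + ∑ h ∈ S.erase h₀, ∑ x, fiber c h x + ∑ h ∈ Sᶜ, ∑ x, fiber c h x =
      ∑ x, c x := by
  rw [add_sum_erase S (fun h => ∑ x, fiber c h x) hh₀, sum_add_sum_compl,
    Fintype.sum_prod_type_right]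
  rfl

theorem sum_fiber_add_sum_pairCount_lt (hG : HasLemkePebbling G)
    (hS : ∀ h ∈ Sᶜ, H.Adj h h₀) (hno : ¬ Solvable (G □ H) c (g, h₀)) :
    ∑ x, fiber c h₀ x + ∑ h ∈ Sᶜ, pairCount (fiber c h) < Fintype.card α :=
  lt_of_not_ge fun hle => hno (.of_fiber hG hS hle)

theorem sum_fiber_compl_add_le (hG : HasLemkePebbling G)
    (hS : H.IsCompleteBetween S (Sᶜ : Finset β))
    (htwo : ∀ b ∈ Sᶜ, ¬ NSolvable (G □ H) c (g, b) 2) :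
    ∑ b ∈ Sᶜ, ∑ x, fiber c b x + #Sᶜ * ∑ a ∈ S.erase h₀, pairCount (fiber c a) +
      2 * ∑ b ∈ Sᶜ, min (supportSize (fiber c b)) (Fintype.card α - 1) + #Sᶜ ≤
      3 * (#Sᶜ * Fintype.card α) := by
  have hle : ∀ b ∈ Sᶜ, ∑ x, fiber c b x + ∑ a ∈ S.erase h₀, pairCount (fiber c a) +
      2 * min (supportSize (fiber c b)) (Fintype.card α - 1) + 1 ≤ 3 * Fintype.card α :=
    fun b hb => Nat.succ_le_of_lt <| lt_of_not_ge fun hge =>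
      htwo b hb (nSolvable_two_of_fiber hG (fun a ha => hS (mem_of_mem_erase ha) hb) hge)
  have hsum := sum_le_sum hle
  simp only [sum_add_distrib, sum_const, smul_eq_mul, mul_one, ← mul_sum] at hsum
  linarith

theorem exists_full_fiber_compl (hG : HasLemkePebbling G) (hm : 6 ≤ #S)
    (hn : Fintype.card α ≤ #S + 3) (hSc : #Sᶜ = #S) (hh₀ : h₀ ∈ S)
    (hS : H.IsCompleteBetween S (Sᶜ : Finset β)) (hc : ∑ x, c x = 2 * (#S * Fintype.card α))
    (hno : ¬ Solvable (G □ H) c (g, h₀))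
    (htwo : ∀ b ∈ Sᶜ, ¬ NSolvable (G □ H) c (g, b) 2) :
    ∃ b ∈ Sᶜ, ∀ x, 1 ≤ fiber c b x := by
  by_contra! hnot
  have hmin : ∑ b ∈ Sᶜ, min (supportSize (fiber c b)) (Fintype.card α - 1) =
      ∑ b ∈ Sᶜ, supportSize (fiber c b) := sum_congr rfl fun b hb => by
    have := supportSize_lt_card_of_not_full (a := fiber c b) (by push Not; exact hnot b hb)
    omega
  have htotal := sum_fiber_eq c hh₀
  have hroot := sum_fiber_add_sum_pairCount_lt hG (fun b hb => (hS hh₀ hb).symm) hno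
  have hcompl := sum_fiber_compl_add_le (h₀ := h₀) hG hS htwo
  have hA := sum_fiber_le c (S.erase h₀)
  have hB := sum_fiber_le c Sᶜ
  have hAsupp := sum_supportSize_fiber_erase_add_le c hh₀
  have hpairs := Nat.mul_le_mul_right (∑ a ∈ S.erase h₀, pairCount (fiber c a)) hm
  have hX₀ : 0 ≤ ∑ x, fiber c h₀ x := Nat.zero_le _
  rw [hSc, hmin] at hcompl
  linarith

theorem exists_full_fiber_erase (hG : HasLemkePebbling G) (hm : 6 ≤ #S)
    (hn : Fintype.card α ≤ #S + 3) (hSc : #Sᶜ = #S) (hh₀ : h₀ ∈ S)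
    (hS : H.IsCompleteBetween S (Sᶜ : Finset β)) (hc : ∑ x, c x = 2 * (#S * Fintype.card α))
    (hno : ¬ Solvable (G □ H) c (g, h₀))
    (htwo : ∀ b ∈ Sᶜ, ¬ NSolvable (G □ H) c (g, b) 2)
    (hpairs : ∑ a ∈ S.erase h₀, pairCount (fiber c a) = 0) :
    ∃ a ∈ S.erase h₀, ∀ x, 1 ≤ fiber c a x := by
  by_contra! hnot
  have hAsupp : ∑ a ∈ S.erase h₀, (supportSize (fiber c a) + 1) ≤
      #(S.erase h₀) * Fintype.card α :=
    sum_le_card_nsmul _ _ _ fun a ha => supportSize_lt_card_of_not_full <| by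
      push Not; exact hnot a ha
  have hmin : ∑ b ∈ Sᶜ, supportSize (fiber c b) ≤
      ∑ b ∈ Sᶜ, (min (supportSize (fiber c b)) (Fintype.card α - 1) + 1) :=
    sum_le_sum fun b _ => by
      have := supportSize_le_card (fiber c b)
      omega
  have htotal := sum_fiber_eq c hh₀
  have hroot := sum_fiber_add_sum_pairCount_lt hG (fun b hb => (hS hh₀ hb).symm) hno
  have hcompl := sum_fiber_compl_add_le (h₀ := h₀) hG hS htwo
  have hA := sum_fiber_le c (S.erase h₀)
  have hB := sum_fiber_le c Sᶜ
  have hX₀ : 0 ≤ ∑ x, fiber c h₀ x := Nat.zero_le _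
  have hcard := card_erase_add_one hh₀
  simp only [sum_add_distrib, sum_const, smul_eq_mul, mul_one, hSc, hpairs] at *
  have hmul : #S * Fintype.card α = #(S.erase h₀) * Fintype.card α + Fintype.card α := by
    rw [← hcard, add_one_mul]
  linarith

theorem solvable_of_isCompleteBetween (hG : HasLemkePebbling G) (hm : 6 ≤ #S)
    (hn : Fintype.card α ≤ #S + 3) (hSc : #Sᶜ = #S) (hh₀ : h₀ ∈ S)
    (hS : H.IsCompleteBetween S (Sᶜ : Finset β))
    (hc : ∑ x, c x = 2 * (#S * Fintype.card α)) : Solvable (G □ H) c (g, h₀) := by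
  by_contra hno
  have htwo : ∀ b ∈ Sᶜ, ¬ NSolvable (G □ H) c (g, b) 2 := fun b hb hsolv =>
    hno (NSolvable.of_adj (t := 1) hsolv (boxProd_adj_right.2 (hS hh₀ hb).symm))
  obtain ⟨b, hb, hbfull⟩ := exists_full_fiber_compl hG hm hn hSc hh₀ hS hc hno htwo
  have hpairsA : ∑ a ∈ S.erase h₀, pairCount (fiber c a) = 0 :=
    Nat.eq_zero_of_not_pos fun hpos => htwo b hb <|
      nSolvable_two_of_full_fiber hG (S := S.erase h₀)
        (fun a ha => hS (mem_of_mem_erase ha) hb) hbfull (by omega)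
  obtain ⟨a, ha, hafull⟩ := exists_full_fiber_erase hG hm hn hSc hh₀ hS hc hno htwo hpairsA
  have haS := mem_of_mem_erase ha
  have hpairsB : ∑ b ∈ Sᶜ, pairCount (fiber c b) = 0 :=
    Nat.eq_zero_of_not_pos fun hpos => htwo b hb <|
      nSolvable_two_of_adj_full_fibers hG (hS haS hb) hafull hbfull
        (fun b' hb' => (hS haS hb').symm) hpos
  have hroot := sum_fiber_add_sum_pairCount_lt hG (fun b hb => (hS hh₀ hb).symm) hno
  have htotal := sum_fiber_eq c hh₀
  have hA := sum_fiber_le c (S.erase h₀)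
  have hAsupp := sum_supportSize_fiber_erase_add_le c hh₀
  have hB := sum_fiber_le c Sᶜ
  have hBsupp := sum_supportSize_fiber_le c Sᶜ
  rw [hSc] at hBsupp
  omega

end Counting

section PebblingNumber

theorem pebblingNumber_eq_card {V : Type*} [Fintype V] {G : SimpleGraph V}
    (hG : ∀ (c : V → ℕ) (r : V), ∑ v, c v = Fintype.card V → Solvable G c r) :
    pebblingNumber G = Fintype.card V := by
  classical
  refine IsLeast.csInf_eq ⟨fun c hc r => hG c r hc, fun k hk => le_of_not_gt fun hlt => ?_⟩
  obtain ⟨r⟩ : Nonempty V := Fintype.card_pos_iff.1 (by omega)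
  obtain ⟨s, hs, hsk⟩ := exists_subset_card_eq (s := univ.erase r) (n := k)
    (by rw [card_erase_of_mem (mem_univ r), card_univ]; omega)
  have hrs : r ∉ s := fun hr => by simpa using hs hr
  obtain ⟨c', hc', hr⟩ := hk (fun v => if v ∈ s then 1 else 0) (by simp [hsk]) r
  rcases hc'.cases_head with rfl | ⟨d, ⟨v, w, -, htwo, -⟩, -⟩
  · simp [hrs] at hr
  · dsimp only at htwo
    split_ifs at htwo <;> omega

theorem exists_isCompleteBetween_compl {β : Type*} [Fintype β] [DecidableEq β]
    {H : SimpleGraph β} {m : ℕ} (hβ : Fintype.card β = 2 * m)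
    (hH : completeBipartiteGraph (Fin m) (Fin m) ⊑ H) :
    ∃ S : Finset β, #S = m ∧ #Sᶜ = m ∧ H.IsCompleteBetween S (Sᶜ : Finset β) := by
  obtain ⟨S, T, hS, hT, hST⟩ := completeBipartiteGraph_isContained_iff.1 hH
  rw [Fintype.card_fin] at hS hT
  have hSc : #Sᶜ = m := by rw [card_compl]; omega
  obtain rfl : T = Sᶜ := eq_of_subset_of_card_le
    (subset_compl_iff_disjoint_left.2 (disjoint_coe.1 hST.disjoint)) (by omega)
  exact ⟨S, hS, hSc, hST⟩

theorem HasLemkePebbling.pebblingNumber_boxProd {α β : Type*} [Fintype α] [Fintype β]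
    {G : SimpleGraph α} {H : SimpleGraph β} {m : ℕ} (hG : HasLemkePebbling G) (hm : 6 ≤ m)
    (hα : Fintype.card α ≤ m + 3) (hβ : Fintype.card β = 2 * m)
    (hH : completeBipartiteGraph (Fin m) (Fin m) ⊑ H) :
    pebblingNumber (G □ H) = Fintype.card α * (2 * m) := by
  classical
  obtain ⟨S, hS, hSc, hST⟩ := exists_isCompleteBetween_compl hβ hH
  rw [← hβ, ← Fintype.card_prod]
  refine pebblingNumber_eq_card fun c ⟨g, h₀⟩ hc => ?_
  replace hc : ∑ x, c x = 2 * (m * Fintype.card α) := by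
    rw [hc, Fintype.card_prod, hβ]
    ring
  by_cases hh₀ : h₀ ∈ S
  · exact solvable_of_isCompleteBetween hG (by omega) (by omega) (by omega) hh₀ hST (hS ▸ hc)
  · have hST' : H.IsCompleteBetween (Sᶜ : Finset β) (Sᶜᶜ : Finset β) := by
      simpa only [compl_compl] using hST.symm
    exact solvable_of_isCompleteBetween hG (by omega) (by omega) (by rw [compl_compl]; omega)
      (mem_compl.2 hh₀) hST' (hSc ▸ hc)

end PebblingNumber

section Search

variable {n : ℕ}

/-- The number of pebbles on vertex `v` in a configuration packed as a number in base `32`. -/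
def digit (N v : ℕ) : ℕ := N / 32 ^ v % 32

/-- A configuration packed in base `32`, which the kernel evaluates much faster than a
function. It determines the configuration as long as no vertex holds `32` pebbles. -/
def pack : (Fin n → ℕ) →+ ℕ where
  toFun c := ∑ v, c v * 32 ^ v.val
  map_zero' := by simp
  map_add' c d := by simp only [Pi.add_apply, add_mul, sum_add_distrib]

theorem pack_apply (c : Fin n → ℕ) : pack c = ∑ v, c v * 32 ^ v.val := rfl

theorem pack_single (v : Fin n) (k : ℕ) : pack (Pi.single v k) = k * 32 ^ v.val := by
  simp [pack_apply, Pi.single_apply]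

theorem digit_pack {c : Fin n → ℕ} (hc : ∀ v, c v < 32) (v : Fin n) :
    digit (pack c) v = c v :=
  congrArg Fin.val <| congrFun
    (finFunctionFinEquiv.symm_apply_apply fun u => (⟨c u, hc u⟩ : Fin 32)) v

/-- Depth-first search, with fuel `k`, for a sequence of moves that places `t` pebbles on `r`.
The entry `(v, ws)` of `ms` lists the moves out of `v`; an element `(w, cost)` of `ws` is the
move to `w`, and its cost is charged to the budget. -/
def searchMoves (ms : List (Fin n × List (Fin n × ℕ))) (r : Fin n) (t : ℕ) : ℕ → ℕ → ℕ → Bool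
  | 0, _, N => Nat.ble t (digit N r)
  | k + 1, budget, N => Nat.ble t (digit N r) || ms.any fun m =>
      Nat.ble 2 (digit N m.1) && m.2.any fun w => Nat.ble w.2 budget &&
        searchMoves ms r t k (budget - w.2) (N - 2 * 32 ^ m.1.val + 32 ^ w.1.val)

theorem nSolvable_of_searchMoves {G : SimpleGraph (Fin n)}
    {ms : List (Fin n × List (Fin n × ℕ))} (hms : ∀ m ∈ ms, ∀ w ∈ m.2, G.Adj m.1 w.1)
    {r : Fin n} {t k budget : ℕ} {c : Fin n → ℕ} (hc : ∑ v, c v < 32)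
    (h : searchMoves ms r t k budget (pack c)) : NSolvable G c r t := by
  have hdigit (v : Fin n) : digit (pack c) v = c v :=
    digit_pack (fun u => (single_le_sum (fun _ _ => Nat.zero_le _) (mem_univ u)).trans_lt hc) v
  induction k generalizing budget c with
  | zero => exact .of_le (by simpa only [searchMoves, hdigit, Nat.ble_eq] using h)
  | succ k ih =>
    simp only [searchMoves, hdigit, Bool.or_eq_true, Nat.ble_eq, List.any_eq_true,
      Bool.and_eq_true] at h
    obtain ht | ⟨⟨v, ws⟩, hm, hv, ⟨w, cost⟩, hw, -, hnext⟩ := h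
    · exact .of_le ht
    obtain ⟨e, rfl⟩ := exists_add_of_le (single_le_iff_le_apply.2 hv)
    simp only [map_add, pack_single, add_tsub_cancel_left, Pi.add_apply, sum_add_distrib,
      sum_pi_single', mem_univ, if_true] at hnext hc
    have hmove : PebblesTo G (Pi.single v 2 + e) (Pi.single w 1 + e) :=
      .add_right (.single_of_adj (hms _ hm _ hw) 1) e
    have hsum : ∑ u, (Pi.single w 1 + e : Fin n → ℕ) u < 32 := by
      simp only [Pi.add_apply, sum_add_distrib, sum_pi_single', mem_univ, if_true]
      omega
    refine .of_pebblesTo hmove (ih (budget := budget - cost) hsum ?_ fun u => ?_)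
    · simpa only [map_add, pack_single, one_mul, add_comm] using hnext
    · exact digit_pack
        (fun u => (single_le_sum (fun _ _ => Nat.zero_le _) (mem_univ u)).trans_lt hsum) u

/-- Whether `P` holds for all configurations on the listed vertices, packed and added to `N`,
that have `m` pebbles, `s` occupied vertices and at most `b v` pebbles on each vertex `v`. -/
def forallConfig (P : ℕ → Bool) (b : Fin n → ℕ) : List (Fin n) → ℕ → ℕ → ℕ → Bool
  | _, m, 0, N => m != 0 || P N
  | [], _, _ + 1, _ => true
  | v :: vs, m, s + 1, N => Nat.blt ((v :: vs).map b).sum m ||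
      ((Nat.ble vs.length s || forallConfig P b vs m (s + 1) N) &&
        (List.range (min (m - s) (b v))).all fun x =>
          forallConfig P b vs (m - (x + 1)) s (N + (x + 1) * 32 ^ v.val))

theorem countP_one_le_le_sum_map {ι : Type*} (c : ι → ℕ) (vs : List ι) :
    vs.countP (1 ≤ c ·) ≤ (vs.map c).sum := by
  induction vs with
  | nil => simp
  | cons v vs ih =>
    rw [List.countP_cons, List.map_cons, List.sum_cons]
    split_ifs with hv
    · have : 1 ≤ c v := by simpa using hv
      omega
    · omega

theorem forallConfig_spec {P : ℕ → Bool} {b c : Fin n → ℕ} (hcb : c ≤ b)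
    {vs : List (Fin n)} {N : ℕ}
    (h : forallConfig P b vs (vs.map c).sum (vs.countP (1 ≤ c ·)) N) :
    P (N + (vs.map fun v => c v * 32 ^ v.val).sum) := by
  induction vs generalizing N with
  | nil => simpa [forallConfig] using h
  | cons v vs ih =>
    have hprune : ((v :: vs).map c).sum ≤ ((v :: vs).map b).sum :=
      List.sum_le_sum fun u _ => hcb u
    rcases hs : (v :: vs).countP (1 ≤ c ·) with _ | s
    · have hzero : ∀ u ∈ v :: vs, c u = 0 := by
        simpa [List.countP_eq_zero, -List.mem_cons] using hs
      rw [hs, List.map_congr_left hzero] at h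
      rw [List.map_congr_left fun u hu => by rw [hzero u hu, zero_mul]]
      simpa [forallConfig] using h
    rw [hs, forallConfig, Bool.or_eq_true, Nat.blt_eq, or_iff_right hprune.not_gt] at h
    simp only [Bool.and_eq_true, Bool.or_eq_true, Nat.ble_eq, List.all_eq_true, List.mem_range,
      List.map_cons, List.sum_cons] at h ⊢
    obtain ⟨hempty, hoccupied⟩ := h
    rcases hv : c v with _ | x
    · have hs' : vs.countP (1 ≤ c ·) = s + 1 := by simpa [hv] using hs
      have hnext := hempty.resolve_left (Nat.not_le.2 (hs'.symm.trans_le List.countP_le_length))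
      simpa [hv] using ih (by simpa [hv, hs'] using hnext)
    · have hs' : vs.countP (1 ≤ c ·) = s := by simpa [hv] using hs
      have hx : x < min (c v + (vs.map c).sum - s) (b v) := by
        have : c v ≤ b v := hcb v
        have := countP_one_le_le_sum_map c vs
        omega
      rw [← add_assoc]
      exact ih (by simpa [hv, hs'] using hoccupied x hx)

end Search

section Check

variable {n : ℕ} (G : SimpleGraph (Fin n)) [DecidableRel G.Adj] (r : Fin n)

/-- The distance to `r`, provided that no vertex is at distance more than `3` from `r`. -/
def rootDist (v : Fin n) : ℕ :=
  if v = r then 0 else if G.Adj v r then 1 else if ∃ w, G.Adj v w ∧ G.Adj w r then 2 else 3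

/-- The moves of `G`, those closest to `r` first. The cost of a move is the loss of weight it
causes, where a pebble at distance `d` from `r` has weight `2 ^ (3 - d)`. -/
def rootMoves : List (Fin n × List (Fin n × ℕ)) :=
  let vs := (List.finRange n).insertionSort fun v w => rootDist G r v ≤ rootDist G r w
  vs.map fun v => (v, (vs.filter (G.Adj v ·)).map fun w =>
    (w, 2 * 2 ^ (3 - rootDist G r v) - 2 ^ (3 - rootDist G r w)))

/-- Whether the search for a way to place `t` pebbles on `r` succeeds from the configuration
packed as `N`. It may waste the weight of the configuration that exceeds that of the target. -/
def canPlace (t N : ℕ) : Bool :=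
  let weight := ((List.finRange n).map fun v : Fin n => digit N v * 2 ^ (3 - rootDist G r v)).sum
  searchMoves (rootMoves G r) r t 32 (weight - t * 2 ^ 3) N

/-- A bound on the number of pebbles on `v` in a configuration of size `m`. If it is exceeded,
then the pebbles on `v` alone place one pebble on `r`, leaving at least `t * n` pebbles. -/
def pileBound (t m : ℕ) (v : Fin n) : ℕ :=
  if 2 ^ rootDist G r v + t * n ≤ m then 2 ^ rootDist G r v - 1 else m

/-- Checks that `t + 1` pebbles can be placed on `r` from every configuration with `m` pebbles,
`s` occupied vertices and no more pebbles on a vertex than `pileBound` allows. -/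
def checkConfigs (t m s : ℕ) : Bool :=
  forallConfig (canPlace G r (t + 1)) (pileBound G r t m) (List.finRange n) m s 0

/-- The finite computation that establishes `HasLemkePebbling G` for the root `r`. -/
def checkRoot : Bool :=
  decide (∀ v, v = r ∨ ∃ w, G.Adj v w ∧ rootDist G r w < rootDist G r v) &&
  (List.range (n + 1)).all (fun s => checkConfigs G r 0 n s) &&
  (List.range n).all fun s => Nat.ble (2 * s) n || checkConfigs G r 1 (3 * n - 2 * s) s

theorem supportSize_eq_countP (c : Fin n → ℕ) :
    supportSize c = (List.finRange n).countP (1 ≤ c ·) := by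
  rw [List.countP_eq_length_filter]
  rfl

variable {G r} {c : Fin n → ℕ} {t : ℕ}

theorem adj_of_mem_rootMoves : ∀ m ∈ rootMoves G r, ∀ w ∈ m.2, G.Adj m.1 w.1 := by
  simp only [rootMoves, List.mem_map]
  rintro _ ⟨v, -, rfl⟩ w hw
  obtain ⟨u, hu, rfl⟩ := List.mem_map.1 hw
  exact of_decide_eq_true (List.mem_filter.1 hu).2

theorem nSolvable_of_checkConfigs
    (hdist : ∀ v, v = r ∨ ∃ w, G.Adj v w ∧ rootDist G r w < rootDist G r v)
    (hrest : ∀ d : Fin n → ℕ, t * n ≤ ∑ v, d v → NSolvable G d r t)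
    (hc : ∑ v, c v < 32) (hcheck : checkConfigs G r t (∑ v, c v) (supportSize c)) :
    NSolvable G c r (t + 1) := by
  by_cases hb : c ≤ pileBound G r t (∑ v, c v)
  · rw [checkConfigs, Fin.sum_univ_def c, supportSize_eq_countP] at hcheck
    have hplace := forallConfig_spec (Fin.sum_univ_def c ▸ hb) hcheck
    rw [zero_add, ← Fin.sum_univ_def, ← pack_apply] at hplace
    exact nSolvable_of_searchMoves adj_of_mem_rootMoves hc hplace
  · obtain ⟨v, hv⟩ := not_forall.1 hb
    rw [not_le] at hv
    have hle : c v ≤ ∑ v, c v := single_le_sum (fun _ _ => Nat.zero_le _) (mem_univ v)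
    rw [pileBound] at hv
    split_ifs at hv with hlarge
    · have hpile : 2 ^ rootDist G r v ≤ c v := Nat.le_of_pred_lt hv
      have hsub := tsub_add_cancel_of_le (single_le_iff_le_apply.2 hpile)
      have hsum : ∑ u, (c - Pi.single v (2 ^ rootDist G r v) : Fin n → ℕ) u +
          2 ^ rootDist G r v = ∑ u, c u := by
        conv_rhs => rw [← hsub]
        simp [sum_add_distrib]
      rw [← hsub]
      exact (hrest _ (by omega)).add (.of_two_pow_le hdist (v := v) (by simp))
    · exact absurd hle hv.not_ge

theorem hasLemkePebbling_of_checkRoot (hn : 3 * n < 32) (h : ∀ r, checkRoot G r) :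
    HasLemkePebbling G := by
  simp only [checkRoot, Bool.and_eq_true, decide_eq_true_eq, List.all_eq_true, List.mem_range,
    Bool.or_eq_true, Nat.ble_eq] at h
  have hsolv (c : Fin n → ℕ) (r : Fin n) (hc : n ≤ ∑ v, c v) : Solvable G c r := by
    obtain ⟨b, -, hbc, hb⟩ := exists_between_sum_eq (zero_le (a := c)) (by simp) hc
    obtain ⟨⟨hdist, hcheck⟩, -⟩ := h r
    have hs : supportSize b < n + 1 := by
      simpa [Nat.lt_succ_iff] using supportSize_le_card b
    exact (nSolvable_of_checkConfigs hdist (fun d _ => .of_le (Nat.zero_le _)) (by omega)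
      (hb.symm ▸ hcheck _ hs)).mono hbc
  refine ⟨by simpa only [Fintype.card_fin] using hsolv, fun c r hs hc => ?_⟩
  rw [Fintype.card_fin] at hs hc
  obtain ⟨⟨hdist, -⟩, hcheck⟩ := h r
  rcases hcheck _ hs with hfew | hcheck
  · exact nSolvable_two_of_two_mul_le (fun d => hsolv d r) (by omega)
  · obtain ⟨b, hbc, hb, hbs⟩ := exists_le_sum_eq_supportSize_eq
      (c := c) (m := 3 * n - 2 * supportSize c) (by omega) (by omega)
    exact (nSolvable_of_checkConfigs hdist (fun d hd => hsolv d r (by omega)) (by omega)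
      (by rwa [hb, hbs])).mono hbc

end Check

section LemkeGraphs

instance : DecidableRel lemkeL.Adj := by unfold lemkeL; infer_instance

instance : DecidableRel lemkeL1.Adj := by unfold lemkeL1; infer_instance

instance : DecidableRel lemkeL2.Adj := by unfold lemkeL2; infer_instance

theorem hasLemkePebbling_lemkeL : HasLemkePebbling lemkeL :=
  hasLemkePebbling_of_checkRoot (by norm_num) (by decide +kernel)

theorem hasLemkePebbling_lemkeL1 : HasLemkePebbling lemkeL1 :=
  hasLemkePebbling_of_checkRoot (by norm_num) (by decide +kernel)

theorem hasLemkePebbling_lemkeL2 : HasLemkePebbling lemkeL2 :=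
  hasLemkePebbling_of_checkRoot (by norm_num) (by decide +kernel)

end LemkeGraphs

theorem stmt13_general {G : SimpleGraph (Fin 8)}
    (hG : G ∈ ({lemkeL, lemkeL1, lemkeL2} : Set (SimpleGraph (Fin 8)))) {m : ℕ} (hm : 6 ≤ m)
    {β : Type*} [Fintype β] {H : SimpleGraph β} (hβ : Fintype.card β = 2 * m)
    (hH : completeBipartiteGraph (Fin m) (Fin m) ⊑ H) :
    pebblingNumber (G □ H) = 16 * m := by
  have hlemke : HasLemkePebbling G := by
    rcases hG with rfl | rfl | rfl
    exacts [hasLemkePebbling_lemkeL, hasLemkePebbling_lemkeL1, hasLemkePebbling_lemkeL2]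
  rw [hlemke.pebblingNumber_boxProd hm (by rw [Fintype.card_fin]; omega) hβ hH, Fintype.card_fin]
  ring

/-- for each minimal Lemke graph `G ∈ {L, L₁, L₂}` and `H ∈ {K₁₂, K_{6,6}}`,
`π(G □ H) = 96`. -/
theorem stmt13 :
    ∀ G ∈ ({lemkeL, lemkeL1, lemkeL2} : Set (SimpleGraph (Fin 8))),
      pebblingNumber (G.boxProd (⊤ : SimpleGraph (Fin 12))) = 96 ∧
      pebblingNumber (G.boxProd (completeBipartiteGraph (Fin 6) (Fin 6))) = 96 :=
  fun _ hG =>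
    ⟨stmt13_general hG le_rfl (by simp) (isContained_top_iff.2 ⟨finSumFinEquiv.toEmbedding⟩),
      stmt13_general hG le_rfl (by simp) (.refl _)⟩
end

section
/- Graham's conjectured inequality holds for the following products: for every G ∈ {L, L₁, L₂} (the three minimal 8-vertex Lemke graphs) and every H ∈ {K₈, K₁₂, K_{4,4}, K_{6,6}}, one has π(G□H) ≤ π(G)·π(H). -/
open SimpleGraph Finset

/-! Cut `G □ H` into columns, the copies of `G` indexed by the vertices of `H`. A column with `p`
pairs (two pebbles on a common vertex) and `b` blocks (pairs and left-over single pebbles) has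
`p + b` pebbles, and each pair can be traded for one pebble in an adjacent column. A finite
computation in a Lemke graph shows that `8` pebbles put a pebble on any root `r`, and that `9`
blocks put two pebbles on `r`, with one exceptional configuration `E` for each root.

Suppose that `8 |H|` pebbles cannot put a pebble on the root `(r, a₀)`. A column `k` next to `a₀`
cannot put two pebbles on `(r, k)`, so it has at most `8` blocks unless it equals `E`; and sending
all pairs of the neighbours of `a₀` to the column `a₀` shows that these pairs and the pebbles of
`a₀` number at most `7`. If `H` is complete, summing these bounds already gives fewer than `8 |H|`
pebbles. If `H` is complete bipartite, the columns on the side of `a₀` first send their pairs to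
the columns next to `a₀`. A column next to `a₀` which equals `E` has a ninth block, but a single
additional pebble turns it into a configuration which is not exceptional, so no column adjacent to
it contains a pair. Finally `|H| ≤ π(H)` and `8 ≤ π(G)`. -/

namespace Pebbling

/-- Some sequence of pebbling moves leads from `c` to a configuration with at least `d v` pebbles
on every vertex `v`; `NSolvable` is the case where `d` is supported on one vertex. -/
def Reaches {V : Type*} (G : SimpleGraph V) (c d : V → ℕ) : Prop :=
  ∃ c', Relation.ReflTransGen (PebblingMove G) c c' ∧ d ≤ c'

theorem piSingle_le_iff {ι α : Type*} [DecidableEq ι] [AddCommMonoid α] [PartialOrder α]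
    [CanonicallyOrderedAdd α] {i : ι} {x : α} {f : ι → α} : Pi.single i x ≤ f ↔ x ≤ f i :=
  update_le_iff.trans (and_iff_left fun _ _ => zero_le)

section Reaches

variable {V : Type*} {G : SimpleGraph V} {c c' d d' e : V → ℕ}

theorem pebblingMove_iff [DecidableEq V] : PebblingMove G c c' ↔
    ∃ (v w : V) (e : V → ℕ),
      G.Adj v w ∧ c = e + Pi.single v 2 ∧ c' = e + Pi.single w 1 := by
  constructor
  · rintro ⟨v, w, hvw, hv, hv', hw', hu⟩
    refine ⟨v, w, c - Pi.single v 2, hvw, ?_, ?_⟩ <;> funext u <;>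
      by_cases huv : u = v <;> by_cases huw : u = w <;>
      simp_all [hvw.ne, Nat.sub_add_cancel]
  · rintro ⟨v, w, e, hvw, rfl, rfl⟩
    refine ⟨v, w, hvw, ?_⟩
    simp +contextual [hvw.ne, hvw.ne']

theorem reflTransGen_pebblingMove_add (e : V → ℕ)
    (h : Relation.ReflTransGen (PebblingMove G) c c') :
    Relation.ReflTransGen (PebblingMove G) (c + e) (c' + e) := by
  classical
  refine h.lift (· + e) fun a b hab => ?_
  obtain ⟨v, w, f, hvw, rfl, rfl⟩ := pebblingMove_iff.1 hab
  exact pebblingMove_iff.2 ⟨v, w, f + e, hvw, add_right_comm _ _ _, add_right_comm _ _ _⟩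

namespace Reaches

theorem of_le (h : d ≤ c) : Reaches G c d := ⟨c, .refl, h⟩

theorem trans (hcd : Reaches G c d) (hde : Reaches G d e) : Reaches G c e := by
  obtain ⟨c', hc, hdc⟩ := hcd
  obtain ⟨d', hd, hed⟩ := hde
  obtain ⟨k, rfl⟩ := exists_add_of_le hdc
  exact ⟨d' + k, hc.trans (reflTransGen_pebblingMove_add k hd), hed.trans le_self_add⟩

theorem add (h : Reaches G c d) (h' : Reaches G c' d') : Reaches G (c + c') (d + d') := by
  obtain ⟨x, hx, hdx⟩ := h
  obtain ⟨x', hx', hdx'⟩ := h'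
  refine ⟨x + x', (reflTransGen_pebblingMove_add c' hx).trans ?_, add_le_add hdx hdx'⟩
  simpa only [add_comm x] using reflTransGen_pebblingMove_add x hx'

theorem sum {ι : Type*} (S : Finset ι) {f g : ι → V → ℕ} (h : ∀ i ∈ S, Reaches G (f i) (g i)) :
    Reaches G (∑ i ∈ S, f i) (∑ i ∈ S, g i) := by
  classical
  induction S using Finset.induction_on with
  | empty => exact of_le le_rfl
  | insert a S ha ih =>
    rw [sum_insert ha, sum_insert ha]
    exact (h a (mem_insert_self a S)).add (ih fun i hi => h i (mem_insert_of_mem hi))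

theorem single_of_adj [DecidableEq V] {v w : V} (h : G.Adj v w) (k : ℕ) :
    Reaches G (Pi.single v (2 * k)) (Pi.single w k) := by
  have move : Reaches G (Pi.single v 2) (Pi.single w 1) :=
    ⟨_, .single (pebblingMove_iff.2 ⟨v, w, 0, h, (zero_add _).symm, rfl⟩), by simp⟩
  induction k with
  | zero => exact of_le (by simp)
  | succ k ih => simpa only [mul_add, mul_one, Pi.single_add] using ih.add move

theorem nsolvable [DecidableEq V] {r : V} {t : ℕ} (h : Reaches G c (Pi.single r t)) :
    NSolvable G c r t := by
  obtain ⟨c', hc, hd⟩ := h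
  exact ⟨c', hc, by simpa using hd r⟩

end Reaches

end Reaches

section Columns

variable {V W : Type*} {G : SimpleGraph V} {H : SimpleGraph W}

/-- The configuration on `V × W` whose restriction to the copy `V × {k}` of `V` is the
column `C k`. -/
def ofColumns (C : W → V → ℕ) : V × W → ℕ := fun p => C p.2 p.1

/-- Reachability in `G □ H` for configurations given by their columns. -/
def ColReaches (G : SimpleGraph V) (H : SimpleGraph W) (C D : W → V → ℕ) : Prop :=
  Reaches (G.boxProd H) (ofColumns C) (ofColumns D)

theorem ofColumns_sum {ι : Type*} (S : Finset ι) (C : ι → W → V → ℕ) :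
    ofColumns (∑ i ∈ S, C i) = ∑ i ∈ S, ofColumns (C i) := by
  funext p
  simp only [ofColumns, Finset.sum_apply]

theorem ofColumns_single_single [DecidableEq V] [DecidableEq W] (k : W) (v : V) (t : ℕ) :
    ofColumns (Pi.single k (Pi.single v t)) = Pi.single (v, k) t := by
  funext ⟨u, l⟩
  by_cases hl : l = k <;> by_cases hu : u = v <;> simp [ofColumns, hl, hu]

namespace ColReaches

variable {C C' D D' : W → V → ℕ}

theorem of_le (h : D ≤ C) : ColReaches G H C D := Reaches.of_le fun p => h p.2 p.1

theorem trans {F : W → V → ℕ} (hCD : ColReaches G H C D) (hDF : ColReaches G H D F) :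
    ColReaches G H C F := Reaches.trans hCD hDF

theorem add (h : ColReaches G H C D) (h' : ColReaches G H C' D') :
    ColReaches G H (C + C') (D + D') := Reaches.add h h'

theorem sum {ι : Type*} (S : Finset ι) {f g : ι → W → V → ℕ}
    (h : ∀ i ∈ S, ColReaches G H (f i) (g i)) :
    ColReaches G H (∑ i ∈ S, f i) (∑ i ∈ S, g i) := by
  unfold ColReaches
  rw [ofColumns_sum, ofColumns_sum]
  exact Reaches.sum S h

variable [DecidableEq W]

theorem single (k : W) {f f' : V → ℕ} (h : Reaches G f f') :
    ColReaches G H (Pi.single k f) (Pi.single k f') := by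
  classical
  obtain ⟨g, hfg, hg⟩ := h
  refine trans ⟨_, hfg.lift (ofColumns ∘ Pi.single k) fun a b hab => ?_, le_rfl⟩
    (of_le (D := Pi.single k f') (C := Pi.single k g) (Pi.single_mono k hg))
  obtain ⟨v, w, e, hvw, rfl, rfl⟩ := pebblingMove_iff.1 hab
  refine pebblingMove_iff.2 ⟨(v, k), (w, k), ofColumns (Pi.single k e), ?_, ?_, ?_⟩
  · exact boxProd_adj_left.2 hvw
  all_goals
    rw [← ofColumns_single_single, Function.comp_apply, Pi.single_add]
    rfl

/-- A column is moved along an edge of `H`. -/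
theorem single_of_adj [Finite V] {h h' : W} (ha : H.Adj h h') (f : V → ℕ) :
    ColReaches G H (Pi.single h (2 • f)) (Pi.single h' f) := by
  classical
  cases nonempty_fintype V
  have decompose (k : W) (g : V → ℕ) :
      (Pi.single k g : W → V → ℕ) = ∑ v, Pi.single k (Pi.single v (g v)) := by
    conv_lhs => rw [← Finset.univ_sum_single g]
    exact map_sum (AddMonoidHom.single (fun _ : W => V → ℕ) k) _ _
  rw [decompose h, decompose h']
  refine sum _ fun v _ => ?_
  unfold ColReaches
  rw [ofColumns_single_single, ofColumns_single_single, Pi.smul_apply, smul_eq_mul]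
  exact Reaches.single_of_adj (boxProd_adj_right.2 ha) (f v)

theorem single_two_of_adj [DecidableEq V] {h h' : W} (ha : H.Adj h h') (v : V) :
    ColReaches G H (Pi.single h (Pi.single v 2)) (Pi.single h' (Pi.single v 1)) := by
  unfold ColReaches
  rw [ofColumns_single_single, ofColumns_single_single]
  exact Reaches.single_of_adj (boxProd_adj_right.2 ha) 1

theorem of_column {a : W} {f : V → ℕ} (h : Reaches G (C a) f) :
    ColReaches G H C (Pi.single a f) :=
  (of_le (piSingle_le_iff.2 le_rfl)).trans (single a h)

theorem of_two_columns {a b : W} (hab : a ≠ b) {f g : V → ℕ} (hf : Reaches G (C a) f)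
    (hg : Reaches G (C b) g) : ColReaches G H C (Pi.single a f + Pi.single b g) := by
  refine trans (of_le fun k => ?_) ((single a hf).add (single b hg))
  by_cases hka : k = a
  · subst hka; simp [hab]
  · by_cases hkb : k = b
    · subst hkb; simp [hka]
    · simp [hka, hkb]

end ColReaches

/-- The result of moving, for each `k`, the configuration `F k` from column `k` to column `h`,
at the price of `2 • F k`. -/
def gather [Fintype W] [DecidableEq W] (C F : W → V → ℕ) (h : W) : W → V → ℕ :=
  C - 2 • F + Pi.single h (∑ k, F k)

variable [Fintype W] [DecidableEq W] {C F : W → V → ℕ} {h k : W}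

theorem gather_self (hF : F h = 0) : gather C F h h = C h + ∑ k, F k := by
  simp [gather, hF]

theorem gather_of_ne (hk : k ≠ h) : gather C F h k = C k - 2 • F k := by
  simp [gather, hk]

theorem gather_of_eq_zero (hk : k ≠ h) (hF : F k = 0) : gather C F h k = C k := by
  simp [gather, hk, hF]

theorem colReaches_gather [Finite V] (hF : 2 • F ≤ C) (hadj : ∀ k, F k ≠ 0 → H.Adj k h) :
    ColReaches G H C (gather C F h) := by
  have hC : C = C - 2 • F + ∑ k, Pi.single k (2 • F k) := by
    have := Finset.univ_sum_single (2 • F)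
    simp only [Pi.smul_apply] at this
    rw [this, tsub_add_cancel_of_le hF]
  have hsum : (Pi.single h (∑ k, F k) : W → V → ℕ) = ∑ k, Pi.single h (F k) :=
    map_sum (AddMonoidHom.single (fun _ : W => V → ℕ) h) _ _
  conv_lhs => rw [hC]
  rw [gather, hsum]
  refine (ColReaches.of_le le_rfl).add (ColReaches.sum _ fun k _ => ?_)
  by_cases hk : F k = 0
  · exact ColReaches.of_le (by simp [hk])
  · exact ColReaches.single_of_adj (hadj k hk) (F k)

end Columns

section Size

theorem two_nsmul_div_two_le {V : Type*} (f : V → ℕ) : 2 • (f / 2) ≤ f :=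
  fun v => Nat.mul_div_le (f v) 2

variable {V : Type*} [Fintype V]

/-- The number of pebbles of a configuration. -/
def size (f : V → ℕ) : ℕ := ∑ v, f v

/-- The number of disjoint pairs of pebbles lying on a common vertex. -/
def pairs (f : V → ℕ) : ℕ := ∑ v, f v / 2

/-- The number of blocks when each pile is cut into pairs and, if its size is odd, a single pebble;
twice this number is the size plus the number of odd piles. -/
def blocks (f : V → ℕ) : ℕ := ∑ v, (f v + 1) / 2

theorem size_eq_pairs_add_blocks (f : V → ℕ) : size f = pairs f + blocks f := by
  unfold size pairs blocks
  rw [← sum_add_distrib]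
  exact sum_congr rfl fun v _ => by omega

theorem blocks_le_pairs_add_card (f : V → ℕ) : blocks f ≤ pairs f + Fintype.card V := by
  unfold pairs blocks
  rw [Fintype.card_eq_sum_ones, ← sum_add_distrib]
  exact sum_le_sum fun v _ => by omega

theorem size_div_two (f : V → ℕ) : size (f / 2) = pairs f := rfl

theorem size_add (f g : V → ℕ) : size (f + g) = size f + size g := sum_add_distrib

theorem size_single [DecidableEq V] (v : V) (k : ℕ) : size (Pi.single v k : V → ℕ) = k := by
  simp [size]

theorem size_sum {ι : Type*} (S : Finset ι) (f : ι → V → ℕ) :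
    size (∑ i ∈ S, f i) = ∑ i ∈ S, size (f i) := by
  simp only [size, Finset.sum_apply]
  exact sum_comm

theorem eq_zero_of_size_eq_zero {f : V → ℕ} (h : size f = 0) : f = 0 :=
  funext fun v => sum_eq_zero_iff.1 h v (mem_univ v)

theorem blocks_mono {f g : V → ℕ} (h : f ≤ g) : blocks f ≤ blocks g :=
  sum_le_sum fun v _ => Nat.div_le_div_right (Nat.add_le_add_right (h v) 1)

theorem pairs_add_two_nsmul (f g : V → ℕ) : pairs (f + 2 • g) = pairs f + size g := by
  rw [pairs, pairs, size, ← sum_add_distrib]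
  refine sum_congr rfl fun v _ => ?_
  simp only [Pi.add_apply, Pi.smul_apply, smul_eq_mul]
  omega

theorem blocks_add_two_nsmul (f g : V → ℕ) : blocks (f + 2 • g) = blocks f + size g := by
  unfold blocks size
  rw [← sum_add_distrib]
  exact sum_congr rfl fun v _ => by simp only [Pi.add_apply, Pi.smul_apply, smul_eq_mul]; omega

theorem blocks_add_single [DecidableEq V] (f : V → ℕ) (v : V) (k : ℕ) :
    blocks (f + Pi.single v (2 * k)) = blocks f + k := by
  rw [← smul_eq_mul, Pi.single_smul, blocks_add_two_nsmul, size_single]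

theorem exists_le_size_eq (f : V → ℕ) {k : ℕ} (hk : k ≤ size f) : ∃ g ≤ f, size g = k := by
  classical
  induction k with
  | zero => exact ⟨0, zero_le, by simp [size]⟩
  | succ k ih =>
    obtain ⟨g, hgf, hg⟩ := ih (by omega)
    obtain ⟨v, -, hv⟩ : ∃ v ∈ univ, g v < f v := exists_lt_of_sum_lt (hg.trans_lt hk)
    refine ⟨g + Pi.single v 1, fun u => ?_, by rw [size_add, size_single, hg]⟩
    rcases eq_or_ne u v with rfl | hu
    · simpa using hv
    · simpa [hu] using hgf u

theorem exists_two_le_of_pairs_ne_zero {f : V → ℕ} (h : pairs f ≠ 0) : ∃ v, 2 ≤ f v := by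
  obtain ⟨v, -, hv⟩ := exists_ne_zero_of_sum_ne_zero h
  exact ⟨v, by omega⟩

theorem sum_size {ι : Type*} (B : Finset ι) (C : ι → V → ℕ) :
    ∑ b ∈ B, size (C b) = ∑ b ∈ B, pairs (C b) + ∑ b ∈ B, blocks (C b) := by
  rw [← sum_add_distrib]
  exact sum_congr rfl fun b _ => size_eq_pairs_add_blocks _

end Size

section PebblingNumber

variable {V : Type*} {G : SimpleGraph V}

theorem eq_of_reflTransGen_of_le_one {c c' : V → ℕ} (hc : ∀ v, c v ≤ 1)
    (h : Relation.ReflTransGen (PebblingMove G) c c') : c' = c := by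
  rcases h.cases_head with rfl | ⟨_, ⟨v, _, _, hv, _⟩, _⟩
  · rfl
  · have := hc v
    omega

theorem Reaches.of_walk [DecidableEq V] {u r : V} (p : G.Walk u r) :
    Reaches G (Pi.single u (2 ^ p.length)) (Pi.single r 1) := by
  induction p with
  | nil => exact .of_le le_rfl
  | cons h p ih =>
    rw [Walk.length_cons, pow_succ']
    exact (Reaches.single_of_adj h _).trans ih

variable [Fintype V]

/-- One pebble on each vertex other than the root is unsolvable. -/
theorem card_le_of_forall_solvable {k : ℕ} {r : V}
    (h : ∀ c : V → ℕ, size c = k → Solvable G c r) : Fintype.card V ≤ k := by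
  classical
  by_contra! hk
  obtain ⟨S, hS, rfl⟩ := exists_subset_card_eq (s := univ.erase r) (n := k) (by
    rw [card_erase_of_mem (mem_univ r), card_univ]; omega)
  obtain ⟨c', hc', hr⟩ := h (fun v => if v ∈ S then 1 else 0) (by simp [size])
  rw [eq_of_reflTransGen_of_le_one (fun v => by split <;> omega) hc'] at hr
  have hrS : r ∉ S := fun hrS => ne_of_mem_erase (hS hrS) rfl
  simp [hrS] at hr

theorem card_le_pebblingNumber
    (h : ∃ k, ∀ c : V → ℕ, size c = k → ∀ r, Solvable G c r) :
    Fintype.card V ≤ pebblingNumber G := by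
  rcases isEmpty_or_nonempty V with _ | ⟨⟨r⟩⟩
  · simp
  · exact card_le_of_forall_solvable fun c hc => Nat.sInf_mem h c hc r

theorem exists_forall_solvable (hG : G.Connected) :
    ∃ k, ∀ c : V → ℕ, size c = k → ∀ r, Solvable G c r := by
  classical
  obtain ⟨N, hN⟩ := (Set.finite_range fun p : V × V => 2 ^ G.dist p.1 p.2).bddAbove
  refine ⟨Fintype.card V * N + 1, fun c hc r => ?_⟩
  obtain ⟨u, -, hu⟩ : ∃ u ∈ univ, N < c u := exists_lt_of_sum_lt <| by
    rw [sum_const, card_univ, smul_eq_mul, ← size, hc]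
    exact Nat.lt_succ_self _
  obtain ⟨p, hp⟩ := hG.exists_walk_length_eq_dist u r
  have hle : 2 ^ p.length ≤ c u := by
    rw [hp]
    exact (hN ⟨(u, r), rfl⟩).trans hu.le
  exact (Reaches.trans (.of_le (piSingle_le_iff.2 hle)) (.of_walk p)).nsolvable

end PebblingNumber

section Gather

variable {V W : Type*} [DecidableEq W] {G : SimpleGraph V} {H : SimpleGraph W}
  {C F : W → V → ℕ} {S : Finset W} {a h j : W}

/-- Half of every column in `S`, as configuration to be moved by `gather`. -/
def halves (S : Finset W) (C : W → V → ℕ) : W → V → ℕ := S.piecewise (C / 2) 0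

theorem halves_of_mem (ha : a ∈ S) : halves S C a = C a / 2 := piecewise_eq_of_mem S _ _ ha

theorem halves_of_notMem (ha : a ∉ S) : halves S C a = 0 := piecewise_eq_of_notMem S _ _ ha

theorem two_nsmul_halves_le : 2 • halves S C ≤ C := fun k => by
  by_cases hk : k ∈ S
  · simpa only [Pi.smul_apply, halves_of_mem hk] using two_nsmul_div_two_le (C k)
  · simp [halves_of_notMem hk]

variable [Fintype W]

theorem sum_halves : ∑ k, halves S C k = ∑ k ∈ S, C k / 2 := by
  simp only [halves, piecewise, sum_ite_mem, univ_inter, Pi.div_apply, Pi.zero_apply]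
  rfl

theorem colReaches_gather_halves [Finite V] (hS : ∀ k ∈ S, H.Adj k h) :
    ColReaches G H C (gather C (halves S C) h) :=
  colReaches_gather two_nsmul_halves_le fun k hk => hS k <| by
    by_contra hkS
    exact hk (halves_of_notMem hkS)

theorem colReaches_gather_single [Finite V] {f : V → ℕ} (ha : H.Adj a h) (hf : 2 • f ≤ C a) :
    ColReaches G H C (gather C (Pi.single a f) h) := by
  refine colReaches_gather (by rwa [← Pi.single_smul, piSingle_le_iff]) fun k hk => ?_
  obtain rfl : k = a := by
    by_contra hka
    exact hk (by simp [hka])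
  exact ha

theorem colReaches_gather_halves_add_single [Finite V] {f : V → ℕ} (hS : ∀ k ∈ S, H.Adj k h)
    (ha : H.Adj a h) (haS : a ∉ S) (hf : 2 • f ≤ C a) :
    ColReaches G H C (gather C (halves S C + Pi.single a f) h) := by
  refine colReaches_gather (fun k => ?_) fun k hk => ?_
  · rcases eq_or_ne k a with rfl | hka
    · simpa [halves_of_notMem haS] using hf
    · simpa [hka] using two_nsmul_halves_le (S := S) (C := C) k
  · rcases eq_or_ne k a with rfl | hka
    · exact ha
    · by_contra hkh
      exact hk (by simp [hka, halves_of_notMem (fun hkS => hkh (hS k hkS))])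

theorem gather_single_self {f : V → ℕ} (hah : a ≠ h) :
    gather C (Pi.single a f) h h = C h + f := by
  rw [gather_self (Pi.single_eq_of_ne' hah f), sum_pi_single', if_pos (mem_univ a)]

variable [Fintype V]

theorem size_gather_self (hF : F h = 0) :
    size (gather C F h h) = size (C h) + ∑ k, size (F k) := by
  rw [gather_self hF, size_add, size_sum]

theorem sum_size_gather {B : Finset W} (hj : j ∈ B) (hF : ∀ b ∈ B, F b = 0) :
    ∑ b ∈ B, size (gather C F j b) = ∑ b ∈ B, size (C b) + ∑ k, size (F k) := by
  have hB : ∀ b ∈ B.erase j, size (gather C F j b) = size (C b) := fun b hb => by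
    rw [gather_of_eq_zero (ne_of_mem_erase hb) (hF b (mem_of_mem_erase hb))]
  rw [← add_sum_erase B _ hj, ← add_sum_erase B _ hj, size_gather_self (hF j hj), sum_congr rfl hB]
  exact add_right_comm _ _ _

theorem sum_size_halves : ∑ k, size (halves S C k) = ∑ k ∈ S, pairs (C k) := by
  rw [← size_sum, sum_halves, size_sum]
  rfl

theorem sum_size_single (f : V → ℕ) : ∑ k, size ((Pi.single a f : W → V → ℕ) k) = size f := by
  rw [← size_sum, sum_pi_single', if_pos (mem_univ a)]

theorem sum_size_halves_add_single (f : V → ℕ) :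
    ∑ k, size ((halves S C + Pi.single a f : W → V → ℕ) k) = ∑ k ∈ S, pairs (C k) + size f := by
  simp only [Pi.add_apply, size_add, sum_add_distrib, sum_size_halves, sum_size_single]

end Gather

/-- Every configuration of size at least `8` can put a pebble on `r`, and, with the single
exception of `E`, every configuration whose size plus number of odd piles is at least `18` can put
two pebbles on `r`. The four pairs of `E` all lie on `s`. -/
structure OddTwoPebblingExcept {V : Type*} [Fintype V] [DecidableEq V] (G : SimpleGraph V) (r : V)
    (E : V → ℕ) (s : V) : Prop where
  reaches_one : ∀ f : V → ℕ, 8 ≤ size f → Reaches G f (Pi.single r 1)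
  reaches_two : ∀ f : V → ℕ, 9 ≤ blocks f → f ≠ E → Reaches G f (Pi.single r 2)
  half_eq : E / 2 = Pi.single s 4
  blocks_eq : blocks E = 9

namespace OddTwoPebblingExcept

variable {V : Type*} [Fintype V] [DecidableEq V] {G : SimpleGraph V} {r s : V} {E : V → ℕ}
  (hG : OddTwoPebblingExcept G r E s)
include hG

theorem pairs_eq : pairs E = 4 := by rw [← size_div_two, hG.half_eq, size_single]

theorem size_eq : size E = 13 := by rw [size_eq_pairs_add_blocks, hG.pairs_eq, hG.blocks_eq]

theorem two_nsmul_single_le : 2 • Pi.single s 4 ≤ E := hG.half_eq ▸ two_nsmul_div_two_le E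

theorem reaches_two_add_single (v : V) : Reaches G (E + Pi.single v 1) (Pi.single r 2) := by
  refine hG.reaches_two _ (hG.blocks_eq.ge.trans (blocks_mono le_self_add)) fun h => ?_
  have := congrArg size h
  rw [size_add, size_single] at this
  omega

theorem card_le : Fintype.card V ≤ 8 :=
  card_le_of_forall_solvable fun c hc => (hG.reaches_one c hc.ge).nsolvable

end OddTwoPebblingExcept

/-- From the configuration with columns `C`, no pebble can be put on the vertex `(r, a₀)`. -/
def Unsolvable {V W : Type*} [DecidableEq V] [DecidableEq W] (G : SimpleGraph V)
    (H : SimpleGraph W) (r : V) (a₀ : W) (C : W → V → ℕ) : Prop :=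
  ¬ ColReaches G H C (Pi.single a₀ (Pi.single r 1))

namespace Unsolvable

variable {V W : Type*} [DecidableEq V] [DecidableEq W] {G : SimpleGraph V}
  {H : SimpleGraph W} {r s : V} {E : V → ℕ} {a₀ a a' b b' e j : W} {A B : Finset W}
  {C D : W → V → ℕ}

theorem mono (hU : Unsolvable G H r a₀ C) (hCD : ColReaches G H C D) : Unsolvable G H r a₀ D :=
  fun hD => hU (hCD.trans hD)

theorem not_two (hU : Unsolvable G H r a₀ C) (hb : H.Adj b a₀) :
    ¬ ColReaches G H C (Pi.single b (Pi.single r 2)) :=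
  fun h => hU (h.trans (.single_two_of_adj hb r))

theorem not_one_add_one (hU : Unsolvable G H r a₀ C) (hb : H.Adj b a₀) :
    ¬ ColReaches G H C (Pi.single b (Pi.single r 1) + Pi.single b (Pi.single r 1)) := by
  rw [← Pi.single_add, ← Pi.single_add]
  exact hU.not_two hb

variable [Fintype V] (hG : OddTwoPebblingExcept G r E s) (hU : Unsolvable G H r a₀ C)
include hG hU

theorem blocks_le_eight (hb : H.Adj b a₀) (hCb : C b ≠ E) : blocks (C b) ≤ 8 := by
  by_contra! h
  exact hU.not_two hb (.of_column (hG.reaches_two _ h hCb))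

theorem blocks_le_nine (hb : H.Adj b a₀) : blocks (C b) ≤ 9 := by
  by_cases hCb : C b = E
  · rw [hCb, hG.blocks_eq]
  · exact (hU.blocks_le_eight hG hb hCb).trans (by norm_num)

/-- Otherwise two pebbles on `(r, a)` and one on `(r, b)` yield two on `(r, b)`. -/
theorem blocks_le_eight_of_eight_le_size (hb : H.Adj b a₀) (hab : H.Adj a b)
    (hsize : 8 ≤ size (C b)) (hCa : C a ≠ E) : blocks (C a) ≤ 8 := by
  by_contra! h
  have reach := ColReaches.of_two_columns (H := H) hab.ne (hG.reaches_two _ h hCa)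
    (hG.reaches_one _ hsize)
  exact hU.not_one_add_one hb (reach.trans ((ColReaches.single_two_of_adj hab r).add
    (.of_le le_rfl)))

/-- Otherwise two pebbles on each of `(r, a)` and `(r, a')` yield two on `(r, b)`. -/
theorem blocks_le_eight_of_nine_le_blocks (hb : H.Adj b a₀) (hab : H.Adj a b) (hab' : H.Adj a' b)
    (hne : a ≠ a') (h : 9 ≤ blocks (C a)) (hCa : C a ≠ E) (hCa' : C a' ≠ E) :
    blocks (C a') ≤ 8 := by
  by_contra! h'
  have reach := ColReaches.of_two_columns (H := H) hne (hG.reaches_two _ h hCa)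
    (hG.reaches_two _ h' hCa')
  exact hU.not_one_add_one hb (reach.trans ((ColReaches.single_two_of_adj hab r).add
    (.single_two_of_adj hab' r)))

variable [Finite W]

/-- An extra pebble turns `E` into a configuration which can put two pebbles on `r`. -/
theorem pairs_eq_zero_of_adj (he : H.Adj e a₀) (hCe : C e = E) (hae : H.Adj a e) :
    pairs (C a) = 0 := by
  cases nonempty_fintype W
  by_contra h
  obtain ⟨v, hv⟩ := exists_two_le_of_pairs_ne_zero h
  have hle : 2 • Pi.single v 1 ≤ C a := by rwa [← Pi.single_smul, piSingle_le_iff]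
  refine (hU.mono (colReaches_gather_single hae hle)).not_two he (.of_column ?_)
  rw [gather_single_self hae.ne, hCe]
  exact hG.reaches_two_add_single v

theorem size_add_sum_pairs_le (hB : ∀ b ∈ B, H.Adj b a₀) :
    size (C a₀) + ∑ b ∈ B, pairs (C b) ≤ 7 := by
  cases nonempty_fintype W
  by_contra! h
  have ha₀ : a₀ ∉ B := fun ha₀ => (hB a₀ ha₀).ne rfl
  refine hU.mono (colReaches_gather_halves hB) (.of_column (hG.reaches_one _ ?_))
  rwa [size_gather_self (halves_of_notMem ha₀), sum_size_halves]

theorem pairs_add_pairs_le (hb : H.Adj b a₀) (hb' : H.Adj b' a₀) (hne : b ≠ b') :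
    pairs (C b) + pairs (C b') ≤ 7 := by
  have := hU.size_add_sum_pairs_le hG (B := {b, b'}) (by simp [hb, hb'])
  rw [sum_pair hne] at this
  omega

theorem blocks_le_eight_of_eq (he : H.Adj e a₀) (hCe : C e = E) (hb : H.Adj b a₀) (hne : b ≠ e) :
    blocks (C b) ≤ 8 := by
  refine hU.blocks_le_eight hG hb fun hCb => ?_
  have := hU.pairs_add_pairs_le hG hb he hne
  rw [hCb, hCe, hG.pairs_eq] at this
  omega

theorem size_add_sum_size_le (hB : ∀ b ∈ B, H.Adj b a₀) (hCB : ∀ b ∈ B, C b ≠ E) :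
    size (C a₀) + ∑ b ∈ B, size (C b) ≤ 8 * #B + 7 := by
  have hpairs := hU.size_add_sum_pairs_le hG hB
  have hblocks := sum_le_card_nsmul B _ 8 fun b hb => hU.blocks_le_eight hG (hB b hb) (hCB b hb)
  rw [smul_eq_mul] at hblocks
  rw [sum_size]
  omega

theorem size_add_sum_size_le_of_isClique (hB : ∀ b ∈ B, H.Adj b a₀) (hBB : H.IsClique B)
    (hn : 2 ≤ #B) : size (C a₀) + ∑ b ∈ B, size (C b) ≤ 8 * #B + 7 := by
  cases nonempty_fintype W
  by_cases hCB : ∀ b ∈ B, C b ≠ E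
  · exact hU.size_add_sum_size_le hG hB hCB
  push Not at hCB
  obtain ⟨e, heB, hCe⟩ := hCB
  have he := hB e heB
  obtain ⟨b, hbB, hbe⟩ := exists_mem_ne hn e
  have hother : ∀ k ∈ B.erase e, size (C k) ≤ 8 := fun k hk => by
    have hkB := mem_of_mem_erase hk
    have hke := ne_of_mem_erase hk
    rw [size_eq_pairs_add_blocks, hU.pairs_eq_zero_of_adj hG he hCe (hBB hkB heB hke), zero_add]
    exact hU.blocks_le_eight_of_eq hG he hCe (hB k hkB) hke
  have hroot : size (C a₀) + 4 ≤ 7 := by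
    simpa [hCe, hG.pairs_eq] using hU.size_add_sum_pairs_le hG (B := {e}) (by simpa using he)
  -- half of `E`, moved to the column `b`, uses up two of its blocks
  have hb : size (C b) ≤ 7 := by
    have hpairs := hU.pairs_eq_zero_of_adj hG he hCe (hBB hbB heB hbe)
    have hmove := colReaches_gather_single (G := G) (hBB heB hbB hbe.symm)
      (hCe ▸ hG.two_nsmul_single_le)
    have hblocks := (hU.mono hmove).blocks_le_nine hG (hB b hbB)
    rw [gather_single_self hbe.symm, blocks_add_single _ _ 2] at hblocks
    rw [size_eq_pairs_add_blocks]
    omega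
  have hrest := sum_le_card_nsmul ((B.erase e).erase b) (fun k => size (C k)) 8 fun k hk =>
    hother k (mem_of_mem_erase hk)
  rw [smul_eq_mul, card_erase_of_mem (mem_erase.2 ⟨hbe, hbB⟩), card_erase_of_mem heB] at hrest
  rw [← add_sum_erase _ _ heB, ← add_sum_erase _ _ (mem_erase.2 ⟨hbe, hbB⟩), hCe, hG.size_eq]
  omega

end Unsolvable

namespace Unsolvable

variable {V W : Type*} [Fintype V] [DecidableEq V] [Finite W] [DecidableEq W] {G : SimpleGraph V}
  {H : SimpleGraph W} {r s : V} {E : V → ℕ} {a₀ a e j : W} {A B : Finset W} {C : W → V → ℕ}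
  (hG : OddTwoPebblingExcept G r E s) (hU : Unsolvable G H r a₀ C) (hB : ∀ b ∈ B, H.Adj b a₀)
include hG hU hB

/-- A pair in a column next to all of `B` can be sent as a single pebble to any column of `B`. -/
theorem size_add_sum_size_le_of_pairs_ne_zero (ha₀ : a ≠ a₀) (haB : ∀ b ∈ B, H.Adj a b)
    (hn : 2 ≤ #B) (ha : pairs (C a) ≠ 0) : size (C a₀) + ∑ b ∈ B, size (C b) ≤ 8 * #B + 6 := by
  cases nonempty_fintype W
  have hCB : ∀ b ∈ B, C b ≠ E := fun b hb hCb =>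
    ha (hU.pairs_eq_zero_of_adj hG (hB b hb) hCb (haB b hb))
  by_contra! hsize
  obtain ⟨v, hv⟩ := exists_two_le_of_pairs_ne_zero ha
  have hle : 2 • Pi.single v 1 ≤ C a := by rwa [← Pi.single_smul, piSingle_le_iff]
  have becomes_E : ∀ j ∈ B, C j + Pi.single v 1 = E := fun j hj => by
    by_contra hne
    have hU' := hU.mono (colReaches_gather_single (haB j hj) hle)
    have hbound := hU'.size_add_sum_size_le hG hB fun b hb => by
      rcases eq_or_ne b j with rfl | hbj
      · rwa [gather_single_self (haB b hb).ne]
      · rw [gather_of_eq_zero hbj (Pi.single_eq_of_ne' (haB b hb).ne _)]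
        exact hCB b hb
    rw [gather_of_eq_zero (hB j hj).ne' (Pi.single_eq_of_ne' ha₀ _), sum_size_gather hj
      fun b hb => Pi.single_eq_of_ne' (haB b hb).ne _, sum_size_single, size_single] at hbound
    omega
  have four_le_pairs : ∀ j ∈ B, 4 ≤ pairs (C j) := fun j hj => by
    have hsize := congrArg size (becomes_E j hj)
    rw [size_add, size_single, hG.size_eq, size_eq_pairs_add_blocks] at hsize
    have hblocks := hU.blocks_le_eight hG (hB j hj) (hCB j hj)
    omega
  obtain ⟨b, hb, b', hb', hne⟩ := one_lt_card.1 hn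
  have := hU.pairs_add_pairs_le hG (hB b hb) (hB b' hb') hne
  have := four_le_pairs b hb
  have := four_le_pairs b' hb'
  omega

omit hB in
/-- Half of `E` can be sent to column `a`, where it adds two blocks. -/
theorem blocks_le_seven_of_eq (hj : H.Adj j a₀) (hje : j ≠ e) (hCe : C e = E) (hae : H.Adj a e)
    (haj : H.Adj a j) (hsize : 8 ≤ size (C j)) : blocks (C a) ≤ 7 := by
  cases nonempty_fintype W
  have hblocks : blocks (C a + Pi.single s 4) = blocks (C a) + 2 := blocks_add_single _ _ 2
  have hmove := colReaches_gather_single (G := G) hae.symm (hCe ▸ hG.two_nsmul_single_le)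
  have hU' := hU.mono hmove
  by_cases hE : C a + Pi.single s 4 = E
  · rw [hE, hG.blocks_eq] at hblocks
    omega
  have hle := hU'.blocks_le_eight_of_eight_le_size hG hj haj
    (by rwa [gather_of_eq_zero haj.ne' (Pi.single_eq_of_ne hje _)])
    (by rwa [gather_single_self hae.ne'])
  rw [gather_single_self hae.ne'] at hle
  omega

variable (hA : a₀ ∉ A) (hAB : ∀ a ∈ A, ∀ b ∈ B, H.Adj a b)
include hAB

section
include hA

theorem size_add_size_add_sum_pairs_le (hj : j ∈ B) :
    size (C a₀) + size (C j) + ∑ a ∈ A, pairs (C a) + ∑ b ∈ B.erase j, pairs (C b) ≤ 16 := by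
  cases nonempty_fintype W
  have halves_eq_zero : ∀ b ∈ B, halves A C b = 0 := fun b hb =>
    halves_of_notMem fun hbA => (hAB b hbA b hb).ne rfl
  have hU' := hU.mono (colReaches_gather_halves fun a ha => hAB a ha j hj)
  have hpairs := hU'.size_add_sum_pairs_le hG hB
  have hblocks := hU'.blocks_le_nine hG (hB j hj)
  have hsize := size_eq_pairs_add_blocks (gather C (halves A C) j j)
  rw [size_gather_self (halves_eq_zero j hj), sum_size_halves] at hsize
  have hrest : ∀ b ∈ B.erase j, pairs (gather C (halves A C) j b) = pairs (C b) := fun b hb => by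
    rw [gather_of_eq_zero (ne_of_mem_erase hb) (halves_eq_zero b (mem_of_mem_erase hb))]
  rw [gather_of_eq_zero (hB j hj).ne' (halves_of_notMem hA), ← add_sum_erase _ _ hj,
    sum_congr rfl hrest] at hpairs
  omega

end

/-- Otherwise column `a` can still put two pebbles on `r` after sending its pairs in excess of ten
blocks, and together with them all pairs of the rest of `A`, to column `j`. -/
theorem size_add_sum_pairs_add_blocks_sub_le (ha : a ∈ A) (hblocks : 9 ≤ blocks (C a))
    (hCa : C a ≠ E) (hj : j ∈ B) :
    size (C j) + (∑ k ∈ A.erase a, pairs (C k) + (blocks (C a) - 10)) ≤ 7 := by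
  cases nonempty_fintype W
  by_contra! hsize
  have hexcess : blocks (C a) - 10 ≤ size (C a / 2) := by
    have := blocks_le_pairs_add_card (C a)
    have := hG.card_le
    rw [size_div_two]
    omega
  obtain ⟨f, hf, hfsize⟩ := exists_le_size_eq _ hexcess
  have hfa : 2 • f ≤ C a := (nsmul_le_nsmul_right hf 2).trans (two_nsmul_div_two_le _)
  have haj := hAB a ha j hj
  have hjA : j ∉ A := fun hjA => (hAB j hjA j hj).ne rfl
  have hU' := hU.mono (colReaches_gather_halves_add_single
    (fun k hk => hAB k (mem_of_mem_erase hk) j hj) haj (notMem_erase a A) hfa)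
  have hcolumn : gather C (halves (A.erase a) C + Pi.single a f) j a = C a - 2 • f := by
    rw [gather_of_ne haj.ne, Pi.add_apply, halves_of_notMem (notMem_erase a A), zero_add,
      Pi.single_eq_same]
  have hremaining : blocks (C a) = blocks (C a - 2 • f) + size f := by
    rw [← blocks_add_two_nsmul, tsub_add_cancel_of_le hfa]
  have hle := hU'.blocks_le_eight_of_eight_le_size hG (hB j hj) haj (by
    rwa [size_gather_self (by
      simp [halves_of_notMem (fun h => hjA (mem_of_mem_erase h)), haj.ne']),
      sum_size_halves_add_single, hfsize]) (by
    rw [hcolumn]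
    intro hE
    rw [hE, hG.blocks_eq] at hremaining
    rw [eq_zero_of_size_eq_zero (f := f) (by omega), smul_zero, tsub_zero] at hE
    exact hCa hE)
  rw [hcolumn] at hle
  omega

omit [Finite W] in
theorem sum_size_erase_le (hne : B.Nonempty) (ha : a ∈ A) (hblocks : 9 ≤ blocks (C a))
    (hCa : C a ≠ E) (hn : 2 ≤ #B) :
    ∑ k ∈ A.erase a, size (C k) ≤ #(A.erase a) * 8 + #B * ∑ k ∈ A.erase a, pairs (C k) := by
  rw [mul_sum, ← smul_eq_mul, ← sum_const, ← sum_add_distrib]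
  refine sum_le_sum fun k hk => ?_
  have hkA := mem_of_mem_erase hk
  by_cases hCk : C k = E
  · rw [hCk, hG.size_eq, hG.pairs_eq]
    omega
  · obtain ⟨j, hj⟩ := hne
    have hle := hU.blocks_le_eight_of_nine_le_blocks hG (hB j hj) (hAB a ha j hj) (hAB k hkA j hj)
      (ne_of_mem_erase hk).symm hblocks hCa hCk
    have := Nat.le_mul_of_pos_left (pairs (C k)) (zero_lt_two.trans_le hn)
    rw [size_eq_pairs_add_blocks]
    omega

include hA

theorem size_lt_of_nine_le_blocks (hn : 4 ≤ #B) (ha : a ∈ A) (hblocks : 9 ≤ blocks (C a))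
    (hCa : C a ≠ E) :
    size (C a₀) + ∑ k ∈ A, size (C k) + ∑ b ∈ B, size (C b) < 8 * (1 + #A + #B) := by
  by_contra! htotal
  have hne : B.Nonempty := card_pos.1 (by omega)
  have hrest := hU.sum_size_erase_le hG hB hAB hne ha hblocks hCa (by omega)
  have hexcess := sum_le_card_nsmul B _ 7 fun j hj =>
    hU.size_add_sum_pairs_add_blocks_sub_le hG hB hAB ha hblocks hCa hj
  have hpull := sum_le_card_nsmul B
    (fun j => size (C j) + (size (C a₀) + ∑ k ∈ A, pairs (C k))) 16 fun j hj => by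
      have := hU.size_add_size_add_sum_pairs_le hG hB hA hAB hj
      omega
  simp only [sum_add_distrib, sum_const, smul_eq_mul] at hexcess hpull
  have hcard := card_erase_add_one ha
  rw [← add_sum_erase A _ ha, size_eq_pairs_add_blocks (C a)] at htotal
  rw [← add_sum_erase A _ ha] at hpull
  obtain ⟨n, hB'⟩ := Nat.exists_eq_add_of_le' hn
  obtain ⟨t, ht⟩ : ∃ t, t = blocks (C a) - 10 := ⟨_, rfl⟩
  have htb : blocks (C a) ≤ t + 10 := by omega
  rw [← ht, hB'] at hexcess
  rw [hB'] at hpull hrest htotal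
  have hlower : n + 10 + (n + 3) * t ≤ size (C a₀) + pairs (C a) := by linarith
  have hupper : (n + 3) * (size (C a₀) + pairs (C a)) ≤ 8 * n + 26 + t := by linarith
  have := (Nat.mul_le_mul_left (n + 3) hlower).trans hupper
  have : 0 ≤ n ^ 2 + n ^ 2 * t + n * t := Nat.zero_le _
  nlinarith

omit hA in
theorem blocks_add_two_mul_card_le (hj : j ∈ B) :
    blocks (C j) + 2 * #(A.filter (C · = E)) ≤ 9 := by
  cases nonempty_fintype W
  have hhalves : Pi.single s (2 * (2 * #(A.filter (C · = E)))) ≤ ∑ k, halves A C k :=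
    calc Pi.single s (2 * (2 * #(A.filter (C · = E)))) = ∑ k ∈ A.filter (C · = E), C k / 2 := by
          rw [sum_congr rfl fun k hk => by rw [(mem_filter.1 hk).2, hG.half_eq], sum_const,
            ← Pi.single_smul, smul_eq_mul]
          congr 1
          ring
      _ ≤ ∑ k ∈ A, C k / 2 := sum_le_sum_of_subset (filter_subset _ _)
      _ = ∑ k, halves A C k := sum_halves.symm
  have hle := (hU.mono (colReaches_gather_halves fun k hk => hAB k hk j hj)).blocks_le_nine hG
    (hB j hj)
  rw [gather_self (halves_of_notMem fun hjA => (hAB j hjA j hj).ne rfl)] at hle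
  have := (blocks_mono (add_le_add_right hhalves (C j))).trans hle
  rwa [blocks_add_single] at this

theorem size_lt_of_mem_of_eq (hn : 3 ≤ #B) (hblocks : ∀ a ∈ A, 9 ≤ blocks (C a) → C a = E)
    (ha : a ∈ A) (hCa : C a = E) :
    size (C a₀) + ∑ k ∈ A, size (C k) + ∑ b ∈ B, size (C b) < 8 * (1 + #A + #B) := by
  by_contra! htotal
  have hpos : 1 ≤ #(A.filter (C · = E)) := card_pos.2 ⟨a, mem_filter.2 ⟨ha, hCa⟩⟩
  have hA_blocks : ∑ k ∈ A, blocks (C k) ≤ 8 * #A + #(A.filter (C · = E)) := by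
    have hle : ∀ k ∈ A, blocks (C k) ≤ 8 + if C k = E then 1 else 0 := fun k hk => by
      have := hblocks k hk
      split_ifs with hCk
      · rw [hCk, hG.blocks_eq]
      · by_contra! h
        exact hCk (this h)
    refine (sum_le_sum hle).trans_eq ?_
    rw [sum_add_distrib, sum_const, smul_eq_mul, mul_comm, card_filter]
  obtain ⟨j, hj⟩ : B.Nonempty := card_pos.1 (by omega)
  have hpull := hU.size_add_size_add_sum_pairs_le hG hB hA hAB hj
  have hrest := sum_le_card_nsmul (B.erase j) _ _ fun b hb =>
    hU.blocks_add_two_mul_card_le hG hB hAB (mem_of_mem_erase hb)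
  have hcard := card_erase_add_one hj
  rw [← add_sum_erase B _ hj, sum_size A, sum_size (B.erase j)] at htotal
  rw [sum_add_distrib, sum_const, smul_eq_mul, smul_eq_mul] at hrest
  have := Nat.mul_le_mul_left #(B.erase j) hpos
  have := Nat.mul_le_mul_right #(A.filter (C · = E)) (show 2 ≤ #(B.erase j) by omega)
  linarith

theorem size_lt_of_pairs_ne_zero (hn : 2 ≤ #B) (hblocks : ∀ k ∈ A, blocks (C k) ≤ 8) (ha : a ∈ A)
    (hpairs : pairs (C a) ≠ 0) :
    size (C a₀) + ∑ k ∈ A, size (C k) + ∑ b ∈ B, size (C b) < 8 * (1 + #A + #B) := by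
  cases nonempty_fintype W
  obtain ⟨j, hj⟩ : B.Nonempty := card_pos.1 (by omega)
  have haj := hAB a ha j hj
  have ha₀ : a ≠ a₀ := fun h => hA (h ▸ ha)
  have hBA : ∀ b ∈ B, b ∉ A := fun b hb hbA => (hAB b hbA b hb).ne rfl
  -- all pairs of the columns in `A`, except for one pair of column `a`, are sent to column `j`
  obtain ⟨f, hf, hfsize⟩ := exists_le_size_eq (C a / 2) (k := pairs (C a) - 1) (Nat.sub_le _ _)
  have hfa : 2 • f ≤ C a := (nsmul_le_nsmul_right hf 2).trans (two_nsmul_div_two_le _)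
  obtain ⟨F, hF⟩ : ∃ F, F = halves (A.erase a) C + Pi.single a f := ⟨_, rfl⟩
  have hF_eq_zero : ∀ k ∉ A, F k = 0 := fun k hk => by
    have hka : k ≠ a := fun h => hk (h ▸ ha)
    simp [hF, hka, halves_of_notMem fun h => hk (mem_of_mem_erase h)]
  have hU' := hU.mono (colReaches_gather_halves_add_single
    (fun k hk => hAB k (mem_of_mem_erase hk) j hj) haj (notMem_erase a A) hfa)
  rw [← hF] at hU'
  have hbound := hU'.size_add_sum_size_le_of_pairs_ne_zero hG hB ha₀ (hAB a ha) hn (by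
    have := pairs_add_two_nsmul (C a - 2 • f) f
    rw [tsub_add_cancel_of_le hfa] at this
    rw [gather_of_ne haj.ne, hF, Pi.add_apply, halves_of_notMem (notMem_erase a A), zero_add,
      Pi.single_eq_same]
    omega)
  rw [gather_of_eq_zero (hB j hj).ne' (hF_eq_zero _ hA),
    sum_size_gather hj fun b hb => hF_eq_zero b (hBA b hb), hF, sum_size_halves_add_single,
    hfsize] at hbound
  have hA_blocks := sum_le_card_nsmul A _ 8 hblocks
  have hA_pairs := add_sum_erase A (fun k => pairs (C k)) ha
  rw [smul_eq_mul] at hA_blocks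
  rw [sum_size A]
  omega

omit hA in
theorem size_lt_of_forall_pairs_eq_zero (hn : 2 ≤ #B) (hA_ne : A.Nonempty)
    (hblocks : ∀ k ∈ A, blocks (C k) ≤ 8) (hpairs : ∀ k ∈ A, pairs (C k) = 0) :
    size (C a₀) + ∑ k ∈ A, size (C k) + ∑ b ∈ B, size (C b) < 8 * (1 + #A + #B) := by
  cases nonempty_fintype W
  by_contra! htotal
  have hsize : ∀ k ∈ A, size (C k) ≤ 8 := fun k hk => by
    rw [size_eq_pairs_add_blocks, hpairs k hk, zero_add]
    exact hblocks k hk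
  have hA_size := sum_le_card_nsmul A _ 8 hsize
  rw [smul_eq_mul] at hA_size
  obtain ⟨e, he, hCe⟩ : ∃ e ∈ B, C e = E := by
    by_contra! hCB
    have := hU.size_add_sum_size_le hG hB hCB
    omega
  have hB_blocks : ∀ b ∈ B.erase e, blocks (C b) ≤ 8 := fun b hb =>
    hU.blocks_le_eight_of_eq hG (hB e he) hCe (hB b (mem_of_mem_erase hb)) (ne_of_mem_erase hb)
  have hB_pairs := hU.size_add_sum_pairs_le hG hB
  obtain ⟨j, hjB, hje⟩ := exists_mem_ne hn e
  have hj := mem_erase.2 ⟨hje, hjB⟩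
  obtain ⟨a, ha⟩ := hA_ne
  have hA_rest := sum_le_card_nsmul (A.erase a) _ 8 fun k hk => hsize k (mem_of_mem_erase hk)
  have hB_rest := sum_le_card_nsmul ((B.erase e).erase j) _ 8 fun b hb =>
    hB_blocks b (mem_of_mem_erase hb)
  have hA_card := card_erase_add_one ha
  have hB_card := card_erase_add_one he
  have hBe_card := card_erase_add_one hj
  rw [smul_eq_mul] at hA_rest hB_rest
  rw [← add_sum_erase B _ he, hCe, hG.pairs_eq] at hB_pairs
  rw [← add_sum_erase B _ he, hCe, hG.size_eq, sum_size (B.erase e), ← add_sum_erase A _ ha,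
    ← add_sum_erase (B.erase e) (fun b => blocks (C b)) hj] at htotal
  have hsize_a := hsize a ha
  have hpairs_a := hpairs a ha
  have hblocks_j := hB_blocks j hj
  have hsize_j := size_eq_pairs_add_blocks (C j)
  have ha_eq := size_eq_pairs_add_blocks (C a)
  have := hU.blocks_le_seven_of_eq hG (hB j hjB) hje hCe (hAB a ha e he) (hAB a ha j hjB) (by omega)
  omega

theorem size_lt_of_bipartite (hn : 4 ≤ #B) (hA_ne : A.Nonempty) :
    size (C a₀) + ∑ k ∈ A, size (C k) + ∑ b ∈ B, size (C b) < 8 * (1 + #A + #B) := by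
  by_cases hlarge : ∃ a ∈ A, 9 ≤ blocks (C a) ∧ C a ≠ E
  · obtain ⟨a, ha, hblocks, hCa⟩ := hlarge
    exact hU.size_lt_of_nine_le_blocks hG hB hA hAB hn ha hblocks hCa
  push Not at hlarge
  by_cases hE : ∃ a ∈ A, C a = E
  · obtain ⟨a, ha, hCa⟩ := hE
    exact hU.size_lt_of_mem_of_eq hG hB hA hAB (by omega) hlarge ha hCa
  push Not at hE
  have hblocks : ∀ a ∈ A, blocks (C a) ≤ 8 := fun a ha => by
    by_contra! h
    exact hE a ha (hlarge a ha h)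
  by_cases hpairs : ∀ a ∈ A, pairs (C a) = 0
  · exact hU.size_lt_of_forall_pairs_eq_zero hG hB hAB (by omega) hA_ne hblocks hpairs
  push Not at hpairs
  obtain ⟨a, ha, hpairs⟩ := hpairs
  exact hU.size_lt_of_pairs_ne_zero hG hB hA hAB (by omega) hblocks ha hpairs

end Unsolvable

section Product

variable {V W : Type*} [Fintype V] [DecidableEq V] [Fintype W] {G : SimpleGraph V}
  {H : SimpleGraph W}

theorem pebblingNumber_boxProd_le_of_forall_unsolvable [DecidableEq W] (hH : H.Connected)
    (hV : 8 ≤ Fintype.card V) (hG : ∀ r, ∃ E s, OddTwoPebblingExcept G r E s)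
    (hsize : ∀ r E s a₀ C, OddTwoPebblingExcept G r E s → Unsolvable G H r a₀ C →
      ∑ k, size (C k) < 8 * Fintype.card W) :
    pebblingNumber (G.boxProd H) ≤ pebblingNumber G * pebblingNumber H := by
  have hprod : pebblingNumber (G.boxProd H) ≤ 8 * Fintype.card W := by
    refine Nat.sInf_le fun c hc ⟨r, a₀⟩ => ?_
    obtain ⟨E, s, hE⟩ := hG r
    by_contra hsolv
    refine (hsize r E s a₀ (fun k v => c (v, k)) hE fun hreach => hsolv ?_).ne ?_
    · refine Reaches.nsolvable ?_
      rwa [← ofColumns_single_single]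
    · rw [← hc, Fintype.sum_prod_type_right]
      rfl
  have hV_le : Fintype.card V ≤ pebblingNumber G := by
    refine card_le_pebblingNumber ⟨8, fun c hc r => ?_⟩
    obtain ⟨E, s, hE⟩ := hG r
    exact (hE.reaches_one c hc.ge).nsolvable
  have hW_le := card_le_pebblingNumber (exists_forall_solvable hH)
  exact hprod.trans (Nat.mul_le_mul (hV.trans hV_le) hW_le)

theorem pebblingNumber_boxProd_top_le (hW : 3 ≤ Fintype.card W) (hV : 8 ≤ Fintype.card V)
    (hG : ∀ r, ∃ E s, OddTwoPebblingExcept G r E s) :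
    pebblingNumber (G.boxProd (⊤ : SimpleGraph W)) ≤
      pebblingNumber G * pebblingNumber (⊤ : SimpleGraph W) := by
  classical
  have : Nonempty W := Fintype.card_pos_iff.1 (by omega)
  refine pebblingNumber_boxProd_le_of_forall_unsolvable connected_top hV hG
    fun r E s a₀ C hE hU => ?_
  have hcard := card_erase_add_one (mem_univ a₀)
  rw [card_univ] at hcard
  have hle := hU.size_add_sum_size_le_of_isClique hE (B := univ.erase a₀)
    (fun b hb => ne_of_mem_erase hb) (fun _ _ _ _ h => h) (by omega)
  rw [add_sum_erase _ (fun k => size (C k)) (mem_univ a₀)] at hle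
  omega

theorem connected_of_isCompleteMultipartite [DecidableRel H.Adj] [Nonempty W]
    (hH : H.IsCompleteMultipartite) (hdeg : ∀ k, 0 < H.degree k) : H.Connected := by
  refine ⟨fun u v => ?_⟩
  by_cases huv : H.Adj u v
  · exact huv.reachable
  · obtain ⟨w, hw⟩ := (H.degree_pos_iff_exists_adj u).1 (hdeg u)
    have hvw : H.Adj w v := by
      by_contra hwv
      exact hH.trans _ _ _ huv (fun h => hwv h.symm) hw
    exact hw.reachable.trans hvw.reachable

theorem pebblingNumber_boxProd_le_of_isCompleteMultipartite [Nonempty W] [DecidableRel H.Adj]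
    (hH : H.IsCompleteMultipartite) (hdeg : ∀ k, 4 ≤ H.degree k)
    (hpart : ∀ k, ∃ l ≠ k, ¬ H.Adj l k) (hV : 8 ≤ Fintype.card V)
    (hG : ∀ r, ∃ E s, OddTwoPebblingExcept G r E s) :
    pebblingNumber (G.boxProd H) ≤ pebblingNumber G * pebblingNumber H := by
  classical
  have hconn := connected_of_isCompleteMultipartite hH fun k => four_pos.trans_le (hdeg k)
  refine pebblingNumber_boxProd_le_of_forall_unsolvable hconn hV hG fun r E s a₀ C hE hU => ?_
  have hA : ∀ {a}, a ∈ (univ.erase a₀) \ H.neighborFinset a₀ ↔ a ≠ a₀ ∧ ¬ H.Adj a₀ a := by simp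
  have hB : ∀ b ∈ H.neighborFinset a₀, H.Adj b a₀ := fun b hb =>
    ((H.mem_neighborFinset a₀ b).1 hb).symm
  have hsub : H.neighborFinset a₀ ⊆ univ.erase a₀ := fun b hb =>
    mem_erase.2 ⟨(hB b hb).ne, mem_univ b⟩
  obtain ⟨l, hl, hla₀⟩ := hpart a₀
  have hlt := hU.size_lt_of_bipartite hE (A := univ.erase a₀ \ H.neighborFinset a₀) hB (by simp)
    (fun a ha b hb => by
      by_contra hab
      exact hH.trans _ _ _ (fun h => hab h.symm) (fun h => (hA.1 ha).2 h.symm) (hB b hb))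
    (hdeg a₀) ⟨l, hA.2 ⟨hl, fun h => hla₀ h.symm⟩⟩
  rw [add_assoc, sum_sdiff hsub, add_sum_erase _ (fun k => size (C k)) (mem_univ a₀), add_assoc,
    card_sdiff_add_card_eq_card hsub, add_comm 1, card_erase_add_one (mem_univ a₀)] at hlt
  exact hlt

theorem pebblingNumber_boxProd_completeBipartiteGraph_le {α β : Type*} [Fintype α] [Fintype β]
    (hα : 4 ≤ Fintype.card α) (hβ : 4 ≤ Fintype.card β) (hV : 8 ≤ Fintype.card V)
    (hG : ∀ r, ∃ E s, OddTwoPebblingExcept G r E s) :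
    pebblingNumber (G.boxProd (completeBipartiteGraph α β)) ≤
      pebblingNumber G * pebblingNumber (completeBipartiteGraph α β) := by
  classical
  have : Nontrivial α := Fintype.one_lt_card_iff_nontrivial.1 (by omega)
  have : Nontrivial β := Fintype.one_lt_card_iff_nontrivial.1 (by omega)
  have htrans : (completeBipartiteGraph α β).IsCompleteMultipartite := ⟨by simp⟩
  refine pebblingNumber_boxProd_le_of_isCompleteMultipartite htrans ?_ ?_ hV hG
  · rintro (a | b)
    · have hle : univ.map .inr ⊆ (completeBipartiteGraph α β).neighborFinset (.inl a) := by
        simp [subset_iff]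
      simpa using hβ.trans ((card_map _).ge.trans (card_le_card hle))
    · have hle : univ.map .inl ⊆ (completeBipartiteGraph α β).neighborFinset (.inr b) := by
        simp [subset_iff]
      simpa using hα.trans ((card_map _).ge.trans (card_le_card hle))
  · rintro (a | b)
    · obtain ⟨a', ha'⟩ := exists_ne a
      exact ⟨.inl a', by simpa using ha', by simp⟩
    · obtain ⟨b', hb'⟩ := exists_ne b
      exact ⟨.inr b', by simpa using hb', by simp⟩

end Product

section Search

/-- Comparison of configurations which are given as lists, padded by zeros. -/
def dominates : List ℕ → List ℕ → Bool
  | _, [] => true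
  | [], _ :: _ => false
  | b :: l, a :: m => Nat.ble a b && dominates l m

/-- The arcs of a graph on `Fin n`. -/
def arcs {n : ℕ} (G : SimpleGraph (Fin n)) [DecidableRel G.Adj] : List (Fin n × Fin n) :=
  (List.finRange n ×ˢ List.finRange n).filter fun e => G.Adj e.1 e.2

/-- The configurations from which a single pebbling move leads to `d`, along one of the given
arcs and onto a vertex which is occupied in `d`. -/
def unmoves {n : ℕ} (es : List (Fin n × Fin n)) (d : List ℕ) : List (List ℕ) :=
  (es.filter fun e => Nat.ble 1 (d.getD e.2 0)).map fun e =>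
    (d.modify e.2 (Nat.sub · 1)).modify e.1 (Nat.add · 2)

/-- Breadth-first search for the configurations from which some configuration in `queue` can be
reached, except for those which dominate one found before. -/
def searchDemands {n : ℕ} (es : List (Fin n × Fin n)) :
    ℕ → List (List ℕ) → List (List ℕ) → List (List ℕ)
  | 0, found, _ => found
  | _ + 1, found, [] => found
  | k + 1, found, d :: queue =>
    let new := (unmoves es d).filter fun m => !found.any (dominates m)
    searchDemands es k (found ++ new) (queue ++ new)

/-- Configurations from which a pebble can be put on `r`. The bound `300` on the number of steps
of the search is large enough for it to be exhaustive in the graphs considered here. -/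
def demands {n : ℕ} (G : SimpleGraph (Fin n)) [DecidableRel G.Adj] (r : Fin n) : List (List ℕ) :=
  let d := (List.replicate n 0).set r 1
  searchDemands (arcs G) 300 [d] [d]

/-- The pairs `(q, m)` in `M` whose `m` starts with at most `b`, with this entry removed. -/
def residual (b : ℕ) (M : List (ℕ × List ℕ)) : List (ℕ × List ℕ) :=
  M.filterMap fun
    | (_, []) => none
    | (q, a :: m) => bif Nat.ble a b then some (q, m) else none

/-- Whether every configuration of size at least `z` meets the requirement `m`. -/
def isMet (z : ℕ) (m : ℕ × List ℕ) : Bool := Nat.ble m.1 z && m.2.all (Nat.beq 0)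

/-- `covers lim P n s z M` checks that for every list `l` of length `n` and sum `s`, the list
`l.map lim` satisfies `P` or meets one of the requirements `(q, m)` in `M`: it dominates `m`, and
its sum, increased by `z`, is at least `q`. A requirement which is bound to be met ends the search
at once, since `a ≤ lim a` in all applications. -/
def covers (lim : ℕ → ℕ) (P : List ℕ → Bool) : ℕ → ℕ → ℕ → List (ℕ × List ℕ) → Bool
  | 0, s, z, M => Nat.ble 1 s || M.any (isMet z) || P []
  | n + 1, s, z, M => M.any (isMet (z + s)) || (List.range (s + 1)).all fun a =>
      covers lim (fun l => P (lim a :: l)) n (s - a) (z + lim a) (residual (lim a) M)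

/-- The finite check behind `OddTwoPebblingExcept`, for the exception `E`. The lists with entries
`2 * a - 1`, where the numbers `a` sum to `9`, are the smallest configurations with `9` blocks. Two
pebbles can be put on `r` by meeting two demands, or by meeting one and keeping `8` pebbles. For
configurations larger than `E` it suffices to add a pebble to `E` on each vertex `v`. -/
def oddTwoPebblingCheck {n : ℕ} (G : SimpleGraph (Fin n)) [DecidableRel G.Adj] (r : Fin n)
    (E : List ℕ) : Bool :=
  let D := demands G r
  covers id (fun _ => false) n 8 0 (D.map fun m => (0, m)) &&
  covers (fun a => 2 * a - 1)
    (fun l => l == E || D.any fun m => dominates l m && D.any (dominates (l.zipWith Nat.sub m)))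
    n 9 0 (D.map fun m => (m.sum + 8, m)) &&
  (List.range n).all fun v => D.any fun m =>
    dominates (E.modify v Nat.succ) m && Nat.ble (m.sum + 8) (E.sum + 1)

theorem exists_size_eq_two_mul_sub_one_le {V : Type*} [Fintype V] {f : V → ℕ} {k : ℕ}
    (hf : k ≤ blocks f) : ∃ g : V → ℕ, size g = k ∧ (fun v => 2 * g v - 1) ≤ f := by
  obtain ⟨g, hgf, hg⟩ := exists_le_size_eq ((f + 1) / 2) hf
  refine ⟨g, hg, fun v => ?_⟩
  have : g v ≤ (f v + 1) / 2 := hgf v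
  change 2 * g v - 1 ≤ f v
  omega

variable {n : ℕ}

/-- The configuration on `Fin n` given by the list of its values. -/
def toConfig (n : ℕ) (l : List ℕ) : Fin n → ℕ := fun i => l.getD i 0

theorem toConfig_ofFn (f : Fin n → ℕ) : toConfig n (List.ofFn f) = f := by
  funext i
  simp [toConfig]

theorem size_toConfig {l : List ℕ} (hl : l.length = n) : size (toConfig n l) = l.sum := by
  subst hl
  simp [size, toConfig]

theorem toConfig_modify {l : List ℕ} (hl : l.length = n) (i : Fin n) (g : ℕ → ℕ) :
    toConfig n (l.modify i g) = Function.update (toConfig n l) i (g (toConfig n l i)) := by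
  subst hl
  funext j
  rcases eq_or_ne i j with rfl | hij
  · simp [toConfig]
  · simp [toConfig, hij.symm, Fin.val_ne_of_ne hij]

theorem toConfig_zipWith_sub {l m : List ℕ} (hl : l.length = n) (hm : m.length = n) :
    toConfig n (l.zipWith Nat.sub m) = toConfig n l - toConfig n m := by
  subst hl
  funext i
  simp [toConfig, hm]

theorem getD_le_getD_of_dominates :
    ∀ {l m : List ℕ}, dominates l m = true → ∀ i, m.getD i 0 ≤ l.getD i 0
  | _, [], _, _ => Nat.zero_le _
  | b :: l, a :: m, h, i => by
    obtain ⟨hab, hlm⟩ := Bool.and_eq_true_iff.1 h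
    cases i with
    | zero => exact Nat.le_of_ble_eq_true hab
    | succ i => exact getD_le_getD_of_dominates hlm i

theorem toConfig_le_of_dominates {l m : List ℕ} (h : dominates l m = true) :
    toConfig n m ≤ toConfig n l := fun i => getD_le_getD_of_dominates h i

variable {G : SimpleGraph (Fin n)} {r : Fin n}

theorem pebblingMove_of_mem_unmoves {es : List (Fin n × Fin n)} (hes : ∀ e ∈ es, G.Adj e.1 e.2)
    {d m : List ℕ} (hd : d.length = n) (hm : m ∈ unmoves es d) :
    m.length = n ∧ PebblingMove G (toConfig n m) (toConfig n d) := by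
  obtain ⟨⟨v, w⟩, he, rfl⟩ := List.mem_map.1 hm
  obtain ⟨hvw, hdw⟩ := List.mem_filter.1 he
  have hdw : 1 ≤ toConfig n d w := Nat.le_of_ble_eq_true hdw
  have hne : v ≠ w := (hes _ hvw).ne
  have hne' : w ≠ v := hne.symm
  refine ⟨by simp [hd], v, w, hes _ hvw, ?_⟩
  simp only [toConfig_modify, List.length_modify, hd]
  refine ⟨?_, ?_, ?_, fun u hu hu' => ?_⟩ <;> simp_all

theorem forall_mem_searchDemands {p : List ℕ → Prop} {es : List (Fin n × Fin n)}
    (hp : ∀ d, p d → ∀ m ∈ unmoves es d, p m) :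
    ∀ {k : ℕ} {found queue : List (List ℕ)}, (∀ d ∈ found, p d) → (∀ d ∈ queue, p d) →
      ∀ d ∈ searchDemands es k found queue, p d
  | 0, _, _, hf, _ => hf
  | _ + 1, _, [], hf, _ => hf
  | k + 1, found, d :: queue, hf, hq => by
    have hnew : ∀ m ∈ (unmoves es d).filter fun m => !found.any (dominates m), p m :=
      fun m hm => hp d (hq d List.mem_cons_self) m (List.mem_of_mem_filter hm)
    refine forall_mem_searchDemands (k := k) hp (fun m hm => ?_) fun m hm => ?_
    · exact (List.mem_append.1 hm).elim (hf m) (hnew m)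
    · exact (List.mem_append.1 hm).elim (fun hm => hq m (List.mem_cons_of_mem d hm)) (hnew m)

variable [DecidableRel G.Adj]

theorem adj_of_mem_arcs {e : Fin n × Fin n} (he : e ∈ arcs G) : G.Adj e.1 e.2 := by
  simpa using (List.mem_filter.1 he).2

theorem reaches_of_mem_demands {d : List ℕ} (hd : d ∈ demands G r) :
    d.length = n ∧ Reaches G (toConfig n d) (Pi.single r 1) := by
  have hr : ∀ d ∈ [(List.replicate n 0).set r 1],
      d.length = n ∧ Reaches G (toConfig n d) (Pi.single r 1) := by
    simp only [List.mem_singleton, forall_eq, List.length_set, List.length_replicate, true_and]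
    refine .of_le (piSingle_le_iff.2 ?_)
    simp [toConfig]
  refine forall_mem_searchDemands (fun d hd m hm => ?_) hr hr d hd
  obtain ⟨hlen, hmove⟩ := pebblingMove_of_mem_unmoves (fun _ => adj_of_mem_arcs) hd.1 hm
  exact ⟨hlen, Reaches.trans ⟨_, .single hmove, le_rfl⟩ hd.2⟩

theorem exists_mem_of_mem_residual {b q : ℕ} {m : List ℕ} {M : List (ℕ × List ℕ)}
    (h : (q, m) ∈ residual b M) : ∃ a ≤ b, (q, a :: m) ∈ M := by
  obtain ⟨⟨q', _ | ⟨a, m'⟩⟩, hM, h⟩ := List.mem_filterMap.1 h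
  · cases h
  · cases hab : Nat.ble a b <;> simp only [hab, cond_true, cond_false] at h
    · cases h
    · cases h
      exact ⟨a, Nat.le_of_ble_eq_true hab, hM⟩

theorem le_and_getD_eq_zero_of_isMet {z : ℕ} {m : ℕ × List ℕ} (h : isMet z m = true) :
    m.1 ≤ z ∧ ∀ i, m.2.getD i 0 = 0 := by
  obtain ⟨hq, hm⟩ := Bool.and_eq_true_iff.1 h
  refine ⟨Nat.le_of_ble_eq_true hq, fun i => ?_⟩
  rcases lt_or_ge i m.2.length with hi | hi
  · rw [List.getD_eq_getElem _ _ hi]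
    exact (Nat.eq_of_beq_eq_true (List.all_eq_true.1 hm _ (List.getElem_mem hi))).symm
  · exact List.getD_eq_default _ _ hi

theorem or_exists_getD_le_of_covers {lim : ℕ → ℕ} (hlim : ∀ a, a ≤ lim a) {n : ℕ} :
    ∀ {P : List ℕ → Bool} {s z : ℕ} {M : List (ℕ × List ℕ)}, covers lim P n s z M = true →
    ∀ {l : List ℕ}, l.length = n → l.sum = s → P (l.map lim) = true ∨
      ∃ m ∈ M, m.1 ≤ z + (l.map lim).sum ∧ ∀ i, m.2.getD i 0 ≤ (l.map lim).getD i 0 := by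
  have of_any {z : ℕ} {M : List (ℕ × List ℕ)} {l : List ℕ}
      (h : M.any (isMet (z + l.sum)) = true) : ∃ m ∈ M, m.1 ≤ z + (l.map lim).sum ∧
        ∀ i, m.2.getD i 0 ≤ (l.map lim).getD i 0 := by
    obtain ⟨m, hm, h⟩ := List.any_eq_true.1 h
    obtain ⟨hz, hm0⟩ := le_and_getD_eq_zero_of_isMet h
    have : l.sum ≤ (l.map lim).sum := by
      simpa using List.sum_le_sum (f := id) fun a (_ : a ∈ l) => hlim a
    exact ⟨m, hm, by omega, fun i => (hm0 i).trans_le (Nat.zero_le _)⟩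
  induction n with
  | zero =>
    rintro P s z M h l hl rfl
    obtain rfl := List.length_eq_zero_iff.1 hl
    simp only [covers, Bool.or_eq_true] at h
    rcases h with (h | h) | h
    · cases h
    · exact .inr (of_any (l := []) h)
    · exact .inl h
  | succ n ih =>
    rintro P s z M h (_ | ⟨a, l⟩) hl rfl
    · cases hl
    simp only [covers, Bool.or_eq_true] at h
    rcases h with h | h
    · exact .inr (of_any h)
    have ha := List.all_eq_true.1 h a (by simp)
    rcases ih ha (Nat.succ_injective hl) (by simp) with hP | ⟨⟨q, m⟩, hm, hq, hle⟩
    · exact .inl hP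
    · obtain ⟨b, hb, hM⟩ := exists_mem_of_mem_residual hm
      refine .inr ⟨(q, b :: m), hM, by simp only [List.map_cons, List.sum_cons]; omega, fun i => ?_⟩
      cases i with
      | zero => exact hb
      | succ i => exact hle i

theorem or_exists_toConfig_le_of_covers {lim : ℕ → ℕ} {P : List ℕ → Bool} {s : ℕ}
    {M : List (ℕ × List ℕ)} (hlim : ∀ a, a ≤ lim a) (h : covers lim P n s 0 M = true)
    {f : Fin n → ℕ} (hf : size f = s) :
    P (List.ofFn (lim ∘ f)) = true ∨
      ∃ m ∈ M, m.1 ≤ size (lim ∘ f) ∧ toConfig n m.2 ≤ lim ∘ f := by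
  have := or_exists_getD_le_of_covers hlim h List.length_ofFn (List.sum_ofFn.trans hf)
  rw [List.map_ofFn, List.sum_ofFn, zero_add] at this
  exact this.imp_right fun ⟨m, hm, hq, hle⟩ =>
    ⟨m, hm, hq, (toConfig_ofFn (lim ∘ f)).subst (motive := (toConfig n m.2 ≤ ·)) fun i => hle i⟩

theorem reaches_one_of_covers
    (h : covers id (fun _ => false) n 8 0 ((demands G r).map fun m => (0, m)) = true)
    {f : Fin n → ℕ} (hf : 8 ≤ size f) : Reaches G f (Pi.single r 1) := by
  obtain ⟨g, hgf, hg⟩ := exists_le_size_eq f hf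
  rcases or_exists_toConfig_le_of_covers (fun _ => le_rfl) h hg with hP | ⟨_, hm, -, hle⟩
  · cases hP
  · obtain ⟨m, hmem, rfl⟩ := List.mem_map.1 hm
    exact .trans (.of_le (le_trans hle hgf)) (reaches_of_mem_demands hmem).2

theorem reaches_two_of_demands {l m m' : List ℕ} (hl : l.length = n) (hm : m ∈ demands G r)
    (hm' : m' ∈ demands G r) (hlm : dominates l m = true)
    (hlm' : dominates (l.zipWith Nat.sub m) m' = true) :
    Reaches G (toConfig n l) (Pi.single r 2) := by
  obtain ⟨hlen, hreach⟩ := reaches_of_mem_demands hm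
  have hle := toConfig_le_of_dominates (n := n) hlm'
  rw [toConfig_zipWith_sub hl hlen] at hle
  have hadd := hreach.add (reaches_of_mem_demands hm').2
  rw [← Pi.single_add] at hadd
  refine .trans (.of_le ?_) hadd
  rw [← add_tsub_cancel_of_le (toConfig_le_of_dominates (n := n) hlm)]
  exact add_le_add_right hle _

theorem reaches_two_of_demand {f : Fin n → ℕ} {m : List ℕ}
    (hG : ∀ f : Fin n → ℕ, 8 ≤ size f → Reaches G f (Pi.single r 1)) (hm : m ∈ demands G r)
    (hmf : toConfig n m ≤ f) (hsize : m.sum + 8 ≤ size f) : Reaches G f (Pi.single r 2) := by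
  obtain ⟨hlen, hreach⟩ := reaches_of_mem_demands hm
  obtain ⟨k, rfl⟩ := exists_add_of_le hmf
  rw [size_add, size_toConfig hlen] at hsize
  have hadd := hreach.add (hG k (by omega))
  rwa [← Pi.single_add] at hadd

theorem reaches_two_of_lt {f : Fin n → ℕ} {E : List ℕ} (hlen : E.length = n)
    (hG : ∀ f : Fin n → ℕ, 8 ≤ size f → Reaches G f (Pi.single r 1))
    (h : ∀ v < n, ∃ m ∈ demands G r,
      dominates (E.modify v Nat.succ) m = true ∧ m.sum + 8 ≤ E.sum + 1)
    (hf : toConfig n E < f) : Reaches G f (Pi.single r 2) := by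
  obtain ⟨hle, v, hv⟩ := Pi.lt_def.1 hf
  obtain ⟨m, hm, hdom, hsize⟩ := h v v.isLt
  refine reaches_two_of_demand hG hm ((toConfig_le_of_dominates hdom).trans ?_) ?_
  · rw [toConfig_modify hlen, update_le_iff]
    exact ⟨hv, fun u _ => hle u⟩
  · refine hsize.trans ?_
    rw [← size_toConfig hlen]
    exact sum_lt_sum (fun u _ => hle u) ⟨v, mem_univ v, hv⟩

theorem oddTwoPebblingExcept_of_check {E : List ℕ} {s : Fin n}
    (h : oddTwoPebblingCheck G r E = true)
    (hhalf : toConfig n E / 2 = Pi.single s 4) (hblocks : blocks (toConfig n E) = 9) :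
    OddTwoPebblingExcept G r (toConfig n E) s := by
  obtain ⟨hone_two, hexc⟩ := Bool.and_eq_true_iff.1 h
  obtain ⟨hone, htwo⟩ := Bool.and_eq_true_iff.1 hone_two
  have reaches_one (f : Fin n → ℕ) : 8 ≤ size f → Reaches G f (Pi.single r 1) :=
    reaches_one_of_covers hone
  refine ⟨reaches_one, fun f hf hne => ?_, hhalf, hblocks⟩
  obtain ⟨g, hg, hgf⟩ := exists_size_eq_two_mul_sub_one_le hf
  set k : Fin n → ℕ := (fun a => 2 * a - 1) ∘ g
  have hkf : k ≤ f := hgf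
  rcases or_exists_toConfig_le_of_covers (fun a => by omega) htwo hg with hP | ⟨_, hm, hq, hle⟩
  · obtain hE | hpair := Bool.or_eq_true_iff.1 hP
    · obtain rfl := eq_of_beq hE
      rw [toConfig_ofFn] at hne
      refine reaches_two_of_lt List.length_ofFn reaches_one (fun v hv => ?_)
        (by rw [toConfig_ofFn]; exact lt_of_le_of_ne hkf hne.symm)
      obtain ⟨m, hm, h⟩ := List.any_eq_true.1 (List.all_eq_true.1 hexc v (List.mem_range.2 hv))
      exact ⟨m, hm, (Bool.and_eq_true_iff.1 h).imp_right Nat.le_of_ble_eq_true⟩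
    · obtain ⟨m, hm, h⟩ := List.any_eq_true.1 hpair
      obtain ⟨hlm, hany⟩ := Bool.and_eq_true_iff.1 h
      obtain ⟨m', hm', hlm'⟩ := List.any_eq_true.1 hany
      have := reaches_two_of_demands List.length_ofFn hm hm' hlm hlm'
      rw [toConfig_ofFn] at this
      exact .trans (.of_le hkf) this
  · obtain ⟨m, hmem, rfl⟩ := List.mem_map.1 hm
    exact .trans (.of_le hkf) (reaches_two_of_demand reaches_one hmem hle hq)

end Search

section Lemke

instance : DecidableRel lemkeL.Adj := inferInstanceAs (DecidableRel (SimpleGraph.fromRel _).Adj)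
instance : DecidableRel lemkeL1.Adj := inferInstanceAs (DecidableRel (SimpleGraph.fromRel _).Adj)
instance : DecidableRel lemkeL2.Adj := inferInstanceAs (DecidableRel (SimpleGraph.fromRel _).Adj)

set_option maxRecDepth 100000 in
theorem exists_oddTwoPebblingExcept_lemkeL (r : Fin 8) :
    ∃ E s, OddTwoPebblingExcept lemkeL r E s := by
  have h : ∀ r, oddTwoPebblingCheck lemkeL r [0, 0, 0, 1, 1, 1, 1, 9] = true := by decide +kernel
  exact ⟨_, 7, oddTwoPebblingExcept_of_check (h r) (by decide) (by decide)⟩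

set_option maxRecDepth 100000 in
theorem exists_oddTwoPebblingExcept_lemkeL1 (r : Fin 8) :
    ∃ E s, OddTwoPebblingExcept lemkeL1 r E s := by
  have h : ∀ r, oddTwoPebblingCheck lemkeL1 r [0, 0, 0, 1, 1, 1, 1, 9] = true := by decide +kernel
  exact ⟨_, 7, oddTwoPebblingExcept_of_check (h r) (by decide) (by decide)⟩

set_option maxRecDepth 100000 in
theorem exists_oddTwoPebblingExcept_lemkeL2 (r : Fin 8) :
    ∃ E s, OddTwoPebblingExcept lemkeL2 r E s := by
  rcases eq_or_ne r 1 with rfl | hr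
  · have h : oddTwoPebblingCheck lemkeL2 1 [0, 0, 1, 0, 1, 9, 1, 1] = true := by decide +kernel
    exact ⟨_, 5, oddTwoPebblingExcept_of_check h (by decide) (by decide)⟩
  · have h : ∀ r ≠ 1, oddTwoPebblingCheck lemkeL2 r [0, 0, 0, 1, 1, 1, 1, 9] = true := by
      decide +kernel
    exact ⟨_, 7, oddTwoPebblingExcept_of_check (h r hr) (by decide) (by decide)⟩

theorem exists_oddTwoPebblingExcept_of_mem {G : SimpleGraph (Fin 8)}
    (hG : G ∈ ({lemkeL, lemkeL1, lemkeL2} : Set (SimpleGraph (Fin 8)))) (r : Fin 8) :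
    ∃ E s, OddTwoPebblingExcept G r E s := by
  obtain rfl | rfl | rfl := hG
  exacts [exists_oddTwoPebblingExcept_lemkeL r, exists_oddTwoPebblingExcept_lemkeL1 r,
    exists_oddTwoPebblingExcept_lemkeL2 r]

end Lemke

end Pebbling

open Pebbling in
theorem stmt14_general {G : SimpleGraph (Fin 8)}
    (hG : G ∈ ({lemkeL, lemkeL1, lemkeL2} : Set (SimpleGraph (Fin 8)))) :
    (∀ (W : Type*) [Fintype W], 3 ≤ Fintype.card W →
      pebblingNumber (G.boxProd (⊤ : SimpleGraph W)) ≤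
        pebblingNumber G * pebblingNumber (⊤ : SimpleGraph W)) ∧
    ∀ (α β : Type*) [Fintype α] [Fintype β], 4 ≤ Fintype.card α → 4 ≤ Fintype.card β →
      pebblingNumber (G.boxProd (completeBipartiteGraph α β)) ≤
        pebblingNumber G * pebblingNumber (completeBipartiteGraph α β) :=
  have hexc := exists_oddTwoPebblingExcept_of_mem hG
  ⟨fun _ _ hW => pebblingNumber_boxProd_top_le hW (by simp) hexc, fun _ _ _ _ hα hβ =>
    pebblingNumber_boxProd_completeBipartiteGraph_le hα hβ (by simp) hexc⟩

/-- Graham's conjectured inequality `π(G □ H) ≤ π(G)·π(H)` holds for every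
minimal Lemke graph `G ∈ {L, L₁, L₂}` and every `H ∈ {K₈, K₁₂, K_{4,4}, K_{6,6}}`. -/
theorem stmt14 :
    ∀ G ∈ ({lemkeL, lemkeL1, lemkeL2} : Set (SimpleGraph (Fin 8))),
      pebblingNumber (G.boxProd (⊤ : SimpleGraph (Fin 8)))
          ≤ pebblingNumber G * pebblingNumber (⊤ : SimpleGraph (Fin 8)) ∧
      pebblingNumber (G.boxProd (⊤ : SimpleGraph (Fin 12)))
          ≤ pebblingNumber G * pebblingNumber (⊤ : SimpleGraph (Fin 12)) ∧
      pebblingNumber (G.boxProd (completeBipartiteGraph (Fin 4) (Fin 4)))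
          ≤ pebblingNumber G * pebblingNumber (completeBipartiteGraph (Fin 4) (Fin 4)) ∧
      pebblingNumber (G.boxProd (completeBipartiteGraph (Fin 6) (Fin 6)))
          ≤ pebblingNumber G * pebblingNumber (completeBipartiteGraph (Fin 6) (Fin 6)) := by
  intro G hG
  obtain ⟨hK, hB⟩ := stmt14_general hG
  exact ⟨hK _ (by simp), hK _ (by simp), hB _ _ (by simp) (by simp), hB _ _ (by simp) (by simp)⟩
end
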